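/- Let N ≥ 2 be an integer, 0 < R₁ < R₂, and let Q : [R₁,R₂] → ℝ be continuous satisfying (q1) and (q2). Let g satisfy (g1), be continuously differentiable on a right neighborhood of s = 0 with g'(0) = 0, and satisfy lim_{s→+∞} g(s)/s = +∞. Then there exists a C² function w : [R₁,R₂] → ℝ with w(r) > 0 for all r ∈ [R₁,R₂], w''(r) + ((N−1)/r) w'(r) + Q(r) g(w(r)) = 0 for all r ∈ [R₁,R₂], and w'(R₁) = w'(R₂) = 0; that is, the Neumann problem −Δu = Q(‖x‖) g(u) on the annulus {x ∈ ℝᴺ : R₁ < ‖x‖ < R₂} has at least one positive radially symmetric solution u(x) = w(‖x‖). -/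

import Mathlib

open MeasureTheory Set Filter

/-- The Neumann problem for the radial equation
`w'' + ((N−1)/r) w' + Q(r) g(w) = 0` on `[R₁,R₂]` has a positive `C²` solution,
i.e. the Neumann problem `−Δu = Q(‖x‖) g(u)` on the annulus has a positive
radially symmetric solution `u(x) = w(‖x‖)`. -/
def RadialNeumannPosSol (N : ℕ) (R₁ R₂ : ℝ) (Q g : ℝ → ℝ) : Prop :=
  ∃ w w' w'' : ℝ → ℝ,
    (∀ r ∈ Icc R₁ R₂, HasDerivWithinAt w (w' r) (Icc R₁ R₂) r) ∧
    (∀ r ∈ Icc R₁ R₂, HasDerivWithinAt w' (w'' r) (Icc R₁ R₂) r) ∧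
    ContinuousOn w'' (Icc R₁ R₂) ∧
    (∀ r ∈ Icc R₁ R₂, 0 < w r) ∧
    (∀ r ∈ Icc R₁ R₂, w'' r + (((N : ℝ) - 1) / r) * w' r + Q r * g (w r) = 0) ∧
    w' R₁ = 0 ∧ w' R₂ = 0

/-- Condition (q1): there are `m ≥ 1` pairwise disjoint closed intervals in
`[R₁,R₂]` on which `Q ≥ 0` with `max Q > 0`, while `Q ≤ 0` outside them. -/
def CondQ1 (R₁ R₂ : ℝ) (Q : ℝ → ℝ) : Prop :=
  ∃ (m : ℕ) (σ τ : Fin m → ℝ), 0 < m ∧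
    (∀ i, R₁ ≤ σ i ∧ σ i ≤ τ i ∧ τ i ≤ R₂) ∧
    (Pairwise fun i j => Disjoint (Icc (σ i) (τ i)) (Icc (σ j) (τ j))) ∧
    (∀ i, ∀ r ∈ Icc (σ i) (τ i), 0 ≤ Q r) ∧
    (∀ i, ∃ r ∈ Icc (σ i) (τ i), 0 < Q r) ∧
    (∀ r ∈ Icc R₁ R₂ \ ⋃ i, Icc (σ i) (τ i), Q r ≤ 0)

/-- Condition (g1): `g : [0,∞) → [0,∞)` is continuous, `g 0 = 0`, `g > 0` on `(0,∞)`. -/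
def CondG1 (g : ℝ → ℝ) : Prop :=
  ContinuousOn g (Ici (0:ℝ)) ∧ (∀ s : ℝ, 0 ≤ s → 0 ≤ g s) ∧ g 0 = 0 ∧
    ∀ s : ℝ, 0 < s → 0 < g s

/-- `g` is regularly oscillating at zero. -/
def RegOscAtZero (g : ℝ → ℝ) : Prop :=
  ∀ ε : ℝ, 0 < ε → ∃ δ > (0:ℝ), ∃ η > (0:ℝ), ∀ s ω : ℝ,
    0 < s → s < δ → |ω - 1| < η → |g (ω * s) / g s - 1| < ε

/-- `liminf_{s → +∞} g(s)/s`, computed in `EReal`. -/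
noncomputable def GrowthLiminf (g : ℝ → ℝ) : EReal :=
  liminf (fun s : ℝ => ((g s / s : ℝ) : EReal)) atTop

/-- `limsup_{s → +∞} g(s)/s`, computed in `EReal`. -/
noncomputable def GrowthLimsup (g : ℝ → ℝ) : EReal :=
  limsup (fun s : ℝ => ((g s / s : ℝ) : EReal)) atTop


theorem ode_global {E : Type*} [NormedAddCommGroup E] [NormedSpace ℝ E] [CompleteSpace E]
    (V : ℝ → E → E) (K : ℝ) (hK : 0 ≤ K) (hV : Continuous (Function.uncurry V))
    (hL : ∀ t x y, ‖V t x - V t y‖ ≤ K * ‖x - y‖) (a b : ℝ) (hab : a ≤ b) (x₀ : E) :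
    ∃ X : ℝ → E, X a = x₀ ∧ ∀ t ∈ Icc a b, HasDerivAt X (V t (X t)) t := by
  set l : ℝ := 2 * K + 1 with hl
  have hlpos : 0 < l := by positivity
  let ext : C(Icc a b, E) → ℝ → E := fun u s => Real.exp (l * s) • u (projIcc a b hab s)
  have hextc : ∀ u, Continuous (ext u) := by
    intro u
    have : Continuous fun s => u (projIcc a b hab s) := u.continuous.comp continuous_projIcc
    fun_prop
  have hVc : ∀ u, Continuous fun s => V s (ext u s) := fun u =>
    hV.comp (continuous_id.prodMk (hextc u))
  let Y : C(Icc a b, E) → ℝ → E := fun u t => x₀ + ∫ s in a..t, V s (ext u s)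
  have hYd : ∀ u t, HasDerivAt (Y u) (V t (ext u t)) t := fun u t =>
    ((hVc u).integral_hasStrictDerivAt a t).hasDerivAt.const_add x₀
  have hYc : ∀ u, Continuous (Y u) := fun u =>
    continuous_iff_continuousAt.2 fun t => (hYd u t).continuousAt
  let T : C(Icc a b, E) → C(Icc a b, E) := fun u =>
    ⟨fun t => Real.exp (-(l * t)) • Y u t, by
      have : Continuous fun t : Icc a b => Y u t := (hYc u).comp continuous_subtype_val
      fun_prop⟩
  have hT : ContractingWith (1/2 : NNReal) T := by
    refine ⟨by rw [← NNReal.coe_lt_coe]; norm_num, LipschitzWith.of_dist_le_mul fun u v => ?_⟩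
    rw [ContinuousMap.dist_le (by positivity)]
    intro t
    have hd : ∀ s ∈ Ioc a (t:ℝ), ‖V s (ext u s) - V s (ext v s)‖ ≤ K * dist u v * Real.exp (l * s) := by
      intro s hs
      refine (hL _ _ _).trans ?_
      have : ext u s - ext v s = Real.exp (l * s) • (u (projIcc a b hab s) - v (projIcc a b hab s)) := by
        simp only [ext, smul_sub]
      rw [this, norm_smul, Real.norm_eq_abs, abs_of_pos (Real.exp_pos _), ← dist_eq_norm]
      have := ContinuousMap.dist_apply_le_dist (f := u) (g := v) (projIcc a b hab s)
      have h2 := mul_le_mul_of_nonneg_left this (Real.exp_pos (l * s)).le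
      nlinarith [mul_le_mul_of_nonneg_left h2 hK]
    have hint : ∫ s in a..(t:ℝ), K * dist u v * Real.exp (l * s) =
        K * dist u v * ((Real.exp (l * t) - Real.exp (l * a)) / l) := by
      rw [intervalIntegral.integral_const_mul]
      congr 1
      rw [intervalIntegral.integral_comp_mul_left (fun x => Real.exp x) hlpos.ne']
      simp [integral_exp]
      field_simp
    have hle : ‖∫ s in a..(t:ℝ), (V s (ext u s) - V s (ext v s))‖ ≤
        K * dist u v * ((Real.exp (l * t) - Real.exp (l * a)) / l) := by
      rw [← hint]
      refine intervalIntegral.norm_integral_le_of_norm_le t.2.1 (Eventually.of_forall hd) ?_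
      exact Continuous.intervalIntegrable (by fun_prop) _ _
    have hYY : Y u t - Y v t = ∫ s in a..(t:ℝ), (V s (ext u s) - V s (ext v s)) := by
      rw [intervalIntegral.integral_sub ((hVc u).intervalIntegrable _ _)
        ((hVc v).intervalIntegrable _ _)]
      simp [Y]
    have : dist (T u t) (T v t) = Real.exp (-(l * t)) * ‖Y u t - Y v t‖ := by
      rw [dist_eq_norm]
      change ‖Real.exp (-(l * t)) • Y u t - Real.exp (-(l * t)) • Y v t‖ = _
      rw [← smul_sub, norm_smul, Real.norm_eq_abs, abs_of_pos (Real.exp_pos _)]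
    rw [this, hYY]
    have h1 := mul_le_mul_of_nonneg_left hle (Real.exp_pos (-(l * t))).le
    refine h1.trans ?_
    have h3 : Real.exp (-(l * t)) * Real.exp (l * t) = 1 := by rw [← Real.exp_add]; simp
    have h4 : Real.exp (-(l * t)) * (K * dist u v * ((Real.exp (l * t) - Real.exp (l * a)) / l))
        = K / l * dist u v * (1 - Real.exp (-(l * t)) * Real.exp (l * a)) := by
      rw [← h3]; field_simp
    rw [h4]
    have h5 : K / l ≤ 1/2 := by rw [div_le_iff₀ hlpos]; rw [hl]; linarith
    have h6 : 0 < Real.exp (-(l * t)) * Real.exp (l * a) := by positivity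
    have hd0 : 0 ≤ dist u v := dist_nonneg
    have hKl : 0 ≤ K / l := by positivity
    calc K / l * dist u v * (1 - Real.exp (-(l * t)) * Real.exp (l * a)) ≤ K / l * dist u v * 1 := by
          apply mul_le_mul_of_nonneg_left _ (by positivity); linarith
      _ ≤ _ := by
          rw [mul_one]; push_cast
          exact mul_le_mul_of_nonneg_right h5 hd0
  obtain ⟨u, hu⟩ : ∃ u, T u = u := ⟨_, hT.fixedPoint_isFixedPt⟩
  refine ⟨Y u, by simp [Y], fun t ht => ?_⟩
  have h1 : ext u t = Y u t := by
    have : u ⟨t, ht⟩ = Real.exp (-(l * t)) • Y u t := by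
      conv_lhs => rw [← hu]
      rfl
    simp only [ext]
    rw [projIcc_of_mem hab ht, this, smul_smul, ← Real.exp_add]; simp
  have := hYd u t
  rwa [h1] at this

/-- mean value inequality -/
theorem mv_le {f f' : ℝ → ℝ} {a b C : ℝ} (hab : a ≤ b)
    (hf : ∀ r ∈ Icc a b, HasDerivAt f (f' r) r) (hC : ∀ r ∈ Icc a b, f' r ≤ C) :
    f b - f a ≤ C * (b - a) := by
  rcases hab.eq_or_lt with rfl | h
  · simp
  obtain ⟨c, hc, h2⟩ := exists_hasDerivAt_eq_slope f f' h
    (fun r hr => (hf r hr).continuousAt.continuousWithinAt) (fun x hx => hf x (Ioo_subset_Icc_self hx))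
  have := hC c (Ioo_subset_Icc_self hc)
  rw [h2, div_le_iff₀ (by linarith)] at this
  exact this

theorem mv_ge {f f' : ℝ → ℝ} {a b C : ℝ} (hab : a ≤ b)
    (hf : ∀ r ∈ Icc a b, HasDerivAt f (f' r) r) (hC : ∀ r ∈ Icc a b, C ≤ f' r) :
    C * (b - a) ≤ f b - f a := by
  have := mv_le (f := fun x => - f x) (f' := fun x => - f' x) (C := -C) hab
    (fun r hr => (hf r hr).neg) (fun r hr => neg_le_neg (hC r hr))
  linarith

theorem mv_abs {f f' : ℝ → ℝ} {a b C : ℝ} (hab : a ≤ b)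
    (hf : ∀ r ∈ Icc a b, HasDerivAt f (f' r) r) (hC : ∀ r ∈ Icc a b, |f' r| ≤ C) :
    |f b - f a| ≤ C * (b - a) := by
  rw [abs_le]
  have h1 := mv_le hab hf (fun r hr => (abs_le.1 (hC r hr)).2)
  have h2 := mv_ge hab hf (fun r hr => (abs_le.1 (hC r hr)).1)
  constructor <;> linarith

structure RCoef (p Q : ℝ → ℝ) (p0 p1 q1 : ℝ) : Prop where
  hp : Continuous p
  hQ : Continuous Q
  p0pos : 0 < p0
  lb : ∀ r, p0 ≤ p r
  ub : ∀ r, p r ≤ p1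
  qb : ∀ r, |Q r| ≤ q1

structure RSol (R₁ R₂ : ℝ) (p Q h : ℝ → ℝ) (ν : ℝ) (w y : ℝ → ℝ) : Prop where
  dw : ∀ r ∈ Icc R₁ R₂, HasDerivAt w (y r / p r) r
  dy : ∀ r ∈ Icc R₁ R₂, HasDerivAt y
    (-(p r * (Q r * h (w r) + max (-w r) 0 + ν * max (Q r) 0))) r

/-- the vector field -/
noncomputable def vfield (p Q h : ℝ → ℝ) (ν : ℝ) (t : ℝ) (X : ℝ × ℝ) : ℝ × ℝ :=
  (X.2 / p t, -(p t * (Q t * h X.1 + max (-X.1) 0 + ν * max (Q t) 0)))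

theorem vfield_lip {p Q h : ℝ → ℝ} {p0 p1 q1 k : ℝ} (hc : RCoef p Q p0 p1 q1) (hk : 0 ≤ k)
    (hh : ∀ s t, |h s - h t| ≤ k * |s - t|) (ν t : ℝ) (X Y : ℝ × ℝ) :
    ‖vfield p Q h ν t X - vfield p Q h ν t Y‖ ≤ (1 / p0 + p1 * (q1 * k + 1)) * ‖X - Y‖ := by
  have hp0 := hc.p0pos
  have hpt : 0 < p t := hp0.trans_le (hc.lb t)
  have hp1 : 0 < p1 := hpt.trans_le (hc.ub t)
  have hq1 : 0 ≤ q1 := (abs_nonneg _).trans (hc.qb t)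
  have h1 : |X.1 - Y.1| ≤ ‖X - Y‖ := by
    have := norm_fst_le (X - Y); simpa using this
  have h2 : |X.2 - Y.2| ≤ ‖X - Y‖ := by
    have := norm_snd_le (X - Y); simpa using this
  have hn : 0 ≤ ‖X - Y‖ := norm_nonneg _
  have e1 : |X.2 / p t - Y.2 / p t| ≤ 1 / p0 * ‖X - Y‖ := by
    rw [← sub_div, abs_div, abs_of_pos hpt, div_le_iff₀ hpt]
    have : 1 ≤ 1 / p0 * p t := by
      rw [div_mul_eq_mul_div, le_div_iff₀ hp0]; linarith [hc.lb t]
    nlinarith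
  have e2 : |(-(p t * (Q t * h X.1 + max (-X.1) 0 + ν * max (Q t) 0))) -
      (-(p t * (Q t * h Y.1 + max (-Y.1) 0 + ν * max (Q t) 0)))| ≤ p1 * (q1 * k + 1) * ‖X - Y‖ := by
    have : (-(p t * (Q t * h X.1 + max (-X.1) 0 + ν * max (Q t) 0))) -
      (-(p t * (Q t * h Y.1 + max (-Y.1) 0 + ν * max (Q t) 0))) =
      - (p t * (Q t * (h X.1 - h Y.1) + (max (-X.1) 0 - max (-Y.1) 0))) := by ring
    rw [this, abs_neg, abs_mul, abs_of_pos hpt, mul_assoc]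
    have a1 : |Q t * (h X.1 - h Y.1)| ≤ q1 * (k * ‖X - Y‖) := by
      rw [abs_mul]
      refine mul_le_mul (hc.qb t) ((hh _ _).trans ?_) (abs_nonneg _) hq1
      exact mul_le_mul_of_nonneg_left h1 hk
    have a2 : |max (-X.1) 0 - max (-Y.1) 0| ≤ ‖X - Y‖ := by
      refine (abs_max_sub_max_le_abs _ _ _).trans ?_
      rw [show -X.1 - -Y.1 = -(X.1 - Y.1) by ring, abs_neg]; exact h1
    refine mul_le_mul (hc.ub t) ?_ (abs_nonneg _) hp1.le
    refine (abs_add_le _ _).trans ?_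
    linarith
  have hA : 0 ≤ 1 / p0 * ‖X - Y‖ := by positivity
  have hB : 0 ≤ p1 * (q1 * k + 1) * ‖X - Y‖ := by positivity
  rw [Prod.norm_def]
  refine max_le ?_ ?_
  · refine e1.trans ?_; rw [add_mul]; linarith
  · refine e2.trans ?_; rw [add_mul]; linarith

theorem rsol_exists {R₁ R₂ : ℝ} (hR : R₁ < R₂) {p Q h : ℝ → ℝ} {p0 p1 q1 k : ℝ}
    (hc : RCoef p Q p0 p1 q1) (hk : 0 ≤ k)
    (hh : ∀ s t, |h s - h t| ≤ k * |s - t|) (a ν : ℝ) :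
    ∃ w y, RSol R₁ R₂ p Q h ν w y ∧ w R₁ = a ∧ y R₁ = 0 := by
  have hp0 := hc.p0pos
  have hp1 : 0 < p1 := hp0.trans_le ((hc.lb 0).trans (hc.ub 0))
  have hq1 : 0 ≤ q1 := (abs_nonneg _).trans (hc.qb 0)
  have hcont : Continuous h := by
    have : LipschitzWith ⟨k, hk⟩ h := LipschitzWith.of_dist_le_mul fun x y => by
      rw [Real.dist_eq, Real.dist_eq]; exact hh x y
    exact this.continuous
  have hpc := hc.hp
  have hQc := hc.hQ
  have hV : Continuous (Function.uncurry (vfield p Q h ν)) := by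
    have : ∀ x : ℝ × (ℝ × ℝ), p x.1 ≠ 0 := fun x => (hp0.trans_le (hc.lb _)).ne'
    unfold Function.uncurry vfield
    fun_prop (disch := assumption)
  obtain ⟨X, hX0, hX⟩ := ode_global (vfield p Q h ν) (1 / p0 + p1 * (q1 * k + 1)) (by positivity) hV
    (vfield_lip hc hk hh ν) R₁ R₂ hR.le (a, 0)
  refine ⟨fun t => (X t).1, fun t => (X t).2, ⟨?_, ?_⟩, by simp [hX0], by simp [hX0]⟩
  · intro r hr
    exact (hX r hr).fst
  · intro r hr
    exact (hX r hr).snd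

theorem rsol_dep {R₁ R₂ : ℝ} (hR : R₁ < R₂) {p Q h : ℝ → ℝ} {p0 p1 q1 k : ℝ}
    (hc : RCoef p Q p0 p1 q1) (hk : 0 ≤ k)
    (hh : ∀ s t, |h s - h t| ≤ k * |s - t|) :
    ∃ C : ℝ, 0 ≤ C ∧ ∀ a ν a' ν' w y w' y', RSol R₁ R₂ p Q h ν w y → w R₁ = a → y R₁ = 0 →
      RSol R₁ R₂ p Q h ν' w' y' → w' R₁ = a' → y' R₁ = 0 →
      |y R₂ - y' R₂| ≤ C * (|a - a'| + |ν - ν'|) := by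
  have hp0 := hc.p0pos
  have hp1 : 0 < p1 := hp0.trans_le ((hc.lb 0).trans (hc.ub 0))
  have hq1 : 0 ≤ q1 := (abs_nonneg _).trans (hc.qb 0)
  set K : ℝ := 1 / p0 + p1 * (q1 * k + 1) with hKdef
  have hK : 0 < K := by positivity
  set T := R₂ - R₁
  have hT : 0 < T := sub_pos.2 hR
  have hexp : 1 ≤ Real.exp (K * T) := Real.one_le_exp (by positivity)
  refine ⟨Real.exp (K * T) + p1 * q1 / K * Real.exp (K * T), by positivity, ?_⟩
  intro a ν a' ν' w y w' y' hs hw hy hs' hw' hy'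
  have hL : ∀ t, LipschitzWith ⟨K, hK.le⟩ (vfield p Q h ν t) := fun t =>
    LipschitzWith.of_dist_le_mul fun x y => by
      rw [dist_eq_norm, dist_eq_norm]; exact vfield_lip hc hk hh ν t x y
  have hd1 : ∀ t ∈ Icc R₁ R₂, HasDerivAt (fun r => (w r, y r)) (vfield p Q h ν t (w t, y t)) t :=
    fun t ht => (hs.dw t ht).prodMk (hs.dy t ht)
  have hd2 : ∀ t ∈ Icc R₁ R₂, HasDerivAt (fun r => (w' r, y' r)) (vfield p Q h ν' t (w' t, y' t)) t :=
    fun t ht => (hs'.dw t ht).prodMk (hs'.dy t ht)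
  have key := dist_le_of_approx_trajectories_ODE (v := vfield p Q h ν) (K := ⟨K, hK.le⟩)
    (f := fun r => (w r, y r)) (g := fun r => (w' r, y' r)) (a := R₁) (b := R₂)
    (f' := fun t => vfield p Q h ν t (w t, y t)) (g' := fun t => vfield p Q h ν' t (w' t, y' t))
    (εf := 0) (εg := p1 * q1 * |ν - ν'|) (δ := |a - a'|) hL
    (fun t ht => (hd1 t ht).continuousAt.continuousWithinAt)
    (fun t ht => (hd1 t (Ico_subset_Icc_self ht)).hasDerivWithinAt)
    (fun t ht => by simp)
    (fun t ht => (hd2 t ht).continuousAt.continuousWithinAt)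
    (fun t ht => (hd2 t (Ico_subset_Icc_self ht)).hasDerivWithinAt)
    (fun t ht => by
      rw [dist_eq_norm]
      have : vfield p Q h ν' t (w' t, y' t) - vfield p Q h ν t (w' t, y' t) =
          (0, p t * (max (Q t) 0 * (ν - ν'))) := by
        unfold vfield; ext <;> simp; ring
      rw [this, Prod.norm_def]
      have hpt : 0 < p t := hp0.trans_le (hc.lb t)
      refine max_le (by simp; positivity) ?_
      simp only [norm_mul, Real.norm_eq_abs]
      rw [abs_of_pos hpt, mul_assoc, abs_of_nonneg (le_max_right (Q t) 0)]
      refine mul_le_mul (hc.ub t) ?_ (by positivity) hp1.le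
      refine mul_le_mul_of_nonneg_right ?_ (abs_nonneg _)
      exact max_le ((le_abs_self _).trans (hc.qb t)) hq1)
    (by simp [hw, hy, hw', hy', Prod.dist_eq, Real.dist_eq]) R₂ ⟨hR.le, le_rfl⟩
  have h1 : |y R₂ - y' R₂| ≤ dist (w R₂, y R₂) (w' R₂, y' R₂) := by
    rw [Prod.dist_eq]; exact le_max_right _ _
  refine h1.trans (key.trans ?_)
  rw [gronwallBound_of_K_ne_0 (by exact_mod_cast hK.ne')]
  change |a - a'| * Real.exp (K * T) + (0 + p1 * q1 * |ν - ν'|) / K * (Real.exp (K * T) - 1) ≤ _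
  have e1 : (0 + p1 * q1 * |ν - ν'|) / K = p1 * q1 / K * |ν - ν'| := by rw [zero_add]; ring
  rw [e1]
  have hA : 0 ≤ |a - a'| := abs_nonneg _
  have hB : 0 ≤ |ν - ν'| := abs_nonneg _
  have hD : 0 ≤ p1 * q1 / K := by positivity
  have hE : 0 ≤ Real.exp (K * T) := by positivity
  have := mul_nonneg hD hB
  have := mul_nonneg (mul_nonneg hD hA) hE
  have := mul_nonneg hB hE
  nlinarith

theorem rsol_neg {R₁ R₂ : ℝ} {p Q h : ℝ → ℝ} {p0 p1 q1 : ℝ}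
    (hc : RCoef p Q p0 p1 q1) (h0 : ∀ s ≤ 0, h s = 0) {ν : ℝ} (hν : 0 ≤ ν) {w y : ℝ → ℝ}
    (hs : RSol R₁ R₂ p Q h ν w y) (hy : y R₁ = 0) {r₁ : ℝ} (hr₁ : r₁ ∈ Ico R₁ R₂)
    (hw : w r₁ < 0) : y R₂ < 0 := by
  have hpos : ∀ r, 0 < p r := fun r => hc.p0pos.trans_le (hc.lb r)
  have hwc : ContinuousOn w (Icc R₁ R₂) := fun r hr => (hs.dw r hr).continuousAt.continuousWithinAt
  obtain ⟨ρ, hρ, hmin⟩ := isCompact_Icc.exists_isMinOn (⟨R₁, le_rfl, hr₁.1⟩ : (Icc R₁ r₁).Nonempty)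
    (hwc.mono (Icc_subset_Icc_right hr₁.2.le))
  have hwρ : w ρ < 0 := (hmin (a := r₁) ⟨hr₁.1, le_rfl⟩ : w ρ ≤ w r₁).trans_lt hw
  have hρR : ρ < R₂ := hρ.2.trans_lt hr₁.2
  have hρI : ρ ∈ Icc R₁ R₂ := ⟨hρ.1, hρR.le⟩
  have hyρ : y ρ ≤ 0 := by
    rcases hρ.1.eq_or_lt with e | hlt
    · rw [← e, hy]
    · by_contra hcon
      push Not at hcon
      have hd : 0 < y ρ / p ρ := div_pos hcon (hpos _)
      have := (hs.dw ρ hρI).tendsto_slope.eventually (lt_mem_nhds hd)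
      have h3 : ∀ᶠ r in nhdsWithin ρ (Iio ρ), 0 < slope w ρ r :=
        this.filter_mono (nhdsWithin_mono _ (fun x hx => ne_of_lt hx))
      have h4 : ∀ᶠ r in nhdsWithin ρ (Iio ρ), r ∈ Ioo R₁ ρ := Ioo_mem_nhdsLT hlt
      obtain ⟨r, h5, h6⟩ := (h3.and h4).exists
      have h7 : w ρ ≤ w r := hmin (a := r) ⟨h6.1.le, h6.2.le.trans hρ.2⟩
      rw [slope_def_field] at h5
      have : (w r - w ρ) / (r - ρ) ≤ 0 := div_nonpos_of_nonneg_of_nonpos (by linarith) (by linarith [h6.2])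
      linarith
  have hdy : ∀ r ∈ Icc R₁ R₂, w r ≤ 0 →
      -(p r * (Q r * h (w r) + max (-w r) 0 + ν * max (Q r) 0)) ≤ p r * w r := by
    intro r hr hwr
    rw [h0 _ hwr, max_eq_left (by linarith)]
    have := mul_nonneg (hpos r).le (mul_nonneg hν (le_max_right (Q r) 0))
    nlinarith
  have hneg : ∀ r ∈ Icc ρ R₂, w r < 0 := by
    by_contra hcon
    push Not at hcon
    obtain ⟨r', hr', hw'⟩ := hcon
    have hcl : IsCompact (Icc ρ R₂ ∩ w ⁻¹' Ici 0) := by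
      have : IsClosed (Icc ρ R₂ ∩ w ⁻¹' Ici 0) :=
        (hwc.mono (Icc_subset_Icc_left hρ.1)).preimage_isClosed_of_isClosed isClosed_Icc isClosed_Ici
      exact isCompact_Icc.of_isClosed_subset this inter_subset_left
    obtain ⟨r2, hr2⟩ := hcl.exists_isLeast ⟨r', hr', hw'⟩
    have hlt : ∀ r ∈ Icc ρ r2, w r ≤ 0 := by
      have h1 : ∀ r ∈ Ico ρ r2, w r ≤ 0 := by
        intro r hr
        by_contra hh
        push Not at hh
        have := hr2.2 ⟨⟨hr.1, hr.2.le.trans hr2.1.1.2⟩, hh.le⟩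
        linarith [hr.2]
      intro r hr
      rcases hr.2.eq_or_lt with e | hlt
      · subst e
        have hne : ρ < r := by
          rcases hr.1.eq_or_lt with e | h
          · have := hr2.1.2; rw [← e] at this; exact absurd hwρ (not_lt.2 this)
          · exact h
        have hcw : Tendsto w (nhdsWithin r (Iio r)) (nhds (w r)) :=
          (hs.dw r ⟨hρ.1.trans hr.1, hr2.1.1.2⟩).continuousAt.tendsto.mono_left nhdsWithin_le_nhds
        refine le_of_tendsto hcw ?_
        filter_upwards [Ioo_mem_nhdsLT hne] with x hx using h1 x ⟨hx.1.le, hx.2⟩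
      · exact h1 r ⟨hr.1, hlt⟩
    have hsub : ∀ r ∈ Icc ρ r2, r ∈ Icc R₁ R₂ := fun r hr => ⟨hρ.1.trans hr.1, hr.2.trans hr2.1.1.2⟩
    have hy2 : ∀ r ∈ Icc ρ r2, y r ≤ 0 := by
      intro r hr
      have := mv_le (C := 0) hr.1 (fun x hx => hs.dy x (hsub x ⟨hx.1, hx.2.trans hr.2⟩)) (fun x hx => by
        have hx' : x ∈ Icc ρ r2 := ⟨hx.1, hx.2.trans hr.2⟩
        refine (hdy x (hsub x hx') (hlt x hx')).trans ?_
        exact mul_nonpos_of_nonneg_of_nonpos (hpos x).le (hlt x hx'))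
      linarith
    have := mv_le (C := 0) hr2.1.1.1 (fun x hx => hs.dw x (hsub x hx)) (fun x hx =>
      div_nonpos_of_nonpos_of_nonneg (hy2 x hx) (hpos x).le)
    have h3 : 0 ≤ w r2 := hr2.1.2
    linarith
  have hsub : ∀ r ∈ Icc ρ R₂, r ∈ Icc R₁ R₂ := fun r hr => ⟨hρ.1.trans hr.1, hr.2⟩
  obtain ⟨c, hcm, h2⟩ := exists_hasDerivAt_eq_slope y _ hρR
    (fun r hr => (hs.dy r (hsub r hr)).continuousAt.continuousWithinAt)
    (fun x hx => hs.dy x (hsub x (Ioo_subset_Icc_self hx)))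
  have hcI := Ioo_subset_Icc_self hcm
  have h4 := hdy c (hsub c hcI) (hneg c hcI).le
  have h5 : p c * w c < 0 := mul_neg_of_pos_of_neg (hpos c) (hneg c hcI)
  rw [h2] at h4
  have h6 : (y R₂ - y ρ) / (R₂ - ρ) < 0 := h4.trans_lt h5
  rw [div_lt_iff₀ (by linarith)] at h6
  linarith

theorem rsol_nonneg {R₁ R₂ : ℝ} (hR : R₁ < R₂) {p Q h : ℝ → ℝ} {p0 p1 q1 : ℝ}
    (hc : RCoef p Q p0 p1 q1) (h0 : ∀ s ≤ 0, h s = 0) {ν : ℝ} (hν : 0 ≤ ν) {w y : ℝ → ℝ}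
    (hs : RSol R₁ R₂ p Q h ν w y) (hy : y R₁ = 0) (hy2 : y R₂ = 0) :
    ∀ r ∈ Icc R₁ R₂, 0 ≤ w r := by
  by_contra hcon
  push Not at hcon
  obtain ⟨r, hr, hw⟩ := hcon
  rcases hr.2.eq_or_lt with e | hlt
  · subst e
    have hcw : Tendsto w (nhdsWithin r (Iio r)) (nhds (w r)) :=
      (hs.dw r hr).continuousAt.tendsto.mono_left nhdsWithin_le_nhds
    obtain ⟨x, h1, h2⟩ := ((hcw.eventually (gt_mem_nhds hw)).and (Ioo_mem_nhdsLT hR)).exists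
    have := rsol_neg hc h0 hν hs hy ⟨h2.1.le, h2.2⟩ h1
    linarith
  · have := rsol_neg hc h0 hν hs hy ⟨hr.1, hlt⟩ hw
    linarith

theorem mv_le_o {f f' : ℝ → ℝ} {a b C : ℝ} (hab : a ≤ b)
    (hf : ∀ r ∈ Icc a b, HasDerivAt f (f' r) r) (hC : ∀ r ∈ Ioo a b, f' r ≤ C) :
    f b - f a ≤ C * (b - a) := by
  rcases hab.eq_or_lt with rfl | h
  · simp
  obtain ⟨c, hc, h2⟩ := exists_hasDerivAt_eq_slope f f' h
    (fun r hr => (hf r hr).continuousAt.continuousWithinAt) (fun x hx => hf x (Ioo_subset_Icc_self hx))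
  have := hC c hc
  rw [h2, div_le_iff₀ (by linarith)] at this
  exact this

theorem mv_ge_o {f f' : ℝ → ℝ} {a b C : ℝ} (hab : a ≤ b)
    (hf : ∀ r ∈ Icc a b, HasDerivAt f (f' r) r) (hC : ∀ r ∈ Ioo a b, C ≤ f' r) :
    C * (b - a) ≤ f b - f a := by
  have := mv_le_o (f := fun x => - f x) (f' := fun x => - f' x) (C := -C) hab
    (fun r hr => (hf r hr).neg) (fun r hr => neg_le_neg (hC r hr))
  linarith

theorem max_in_J {R₁ R₂ : ℝ} {p Q h : ℝ → ℝ} {p0 p1 q1 : ℝ}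
    (hc : RCoef p Q p0 p1 q1) (hnn : ∀ s, 0 ≤ h s) {ν : ℝ} {w y : ℝ → ℝ}
    (hs : RSol R₁ R₂ p Q h ν w y) (hy : y R₁ = 0) (hy2 : y R₂ = 0)
    (hw : ∀ r ∈ Icc R₁ R₂, 0 ≤ w r) {U : Set ℝ} (hU : IsClosed U) (hUne : U.Nonempty)
    (hUs : U ⊆ Icc R₁ R₂) (hQ : ∀ r ∈ Icc R₁ R₂ \ U, Q r ≤ 0)
    {r0 : ℝ} (hr0 : r0 ∈ Icc R₁ R₂) (hM : ∀ r ∈ Icc R₁ R₂, w r ≤ w r0) :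
    ∃ r ∈ U, w r = w r0 := by
  have hpos : ∀ r, 0 < p r := fun r => hc.p0pos.trans_le (hc.lb r)
  by_cases hr0U : r0 ∈ U
  · exact ⟨r0, hr0U, rfl⟩
  have hy0 : y r0 = 0 := by
    rcases hr0.1.eq_or_lt with e | h1
    · rw [← e, hy]
    rcases hr0.2.eq_or_lt with e | h2
    · rw [e, hy2]
    have hlm : IsLocalMax w r0 := by
      filter_upwards [Icc_mem_nhds h1 h2] with r hr using hM r hr
    have := hlm.hasDerivAt_eq_zero (hs.dw r0 hr0)
    rcases div_eq_zero_iff.1 this with h | h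
    · exact h
    · exact absurd h (hpos _).ne'
  have hdy : ∀ r ∈ Icc R₁ R₂ \ U, 0 ≤ -(p r * (Q r * h (w r) + max (-w r) 0 + ν * max (Q r) 0)) := by
    intro r hr
    rw [max_eq_right (by linarith [hw r hr.1]), max_eq_right (hQ r hr)]
    have := mul_nonpos_of_nonpos_of_nonneg (hQ r hr) (hnn (w r))
    have := mul_nonpos_of_nonneg_of_nonpos (hpos r).le this
    linarith
  have hcase : (U ∩ Ici r0).Nonempty ∨ (U ∩ Iic r0).Nonempty := by
    obtain ⟨u, hu⟩ := hUne
    rcases le_total r0 u with h | h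
    · exact Or.inl ⟨u, hu, h⟩
    · exact Or.inr ⟨u, hu, h⟩
  have hUc : IsCompact U := isCompact_Icc.of_isClosed_subset hU hUs
  rcases hcase with hne | hne
  · obtain ⟨b, hb⟩ := (hUc.inter_right isClosed_Ici).exists_isLeast hne
    have hb1 : r0 ≤ b := hb.1.2
    have hbR : b ∈ Icc R₁ R₂ := hUs hb.1.1
    have hsub : ∀ r ∈ Icc r0 b, r ∈ Icc R₁ R₂ := fun r hr => ⟨hr0.1.trans hr.1, hr.2.trans hbR.2⟩
    have hyr : ∀ r ∈ Icc r0 b, 0 ≤ y r := by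
      intro r hr
      have := mv_ge_o (C := 0) hr.1 (fun x hx => hs.dy x (hsub x ⟨hx.1, hx.2.trans hr.2⟩)) (fun x hx =>
        hdy x ⟨hsub x ⟨hx.1.le, hx.2.le.trans hr.2⟩, fun hxU => by
          have := hb.2 ⟨hxU, hx.1.le⟩
          linarith [hx.2, hr.2]⟩)
      linarith
    have := mv_ge (C := 0) hb1 (fun x hx => hs.dw x (hsub x hx)) (fun x hx =>
      div_nonneg (hyr x hx) (hpos x).le)
    exact ⟨b, hb.1.1, le_antisymm (hM b hbR) (by linarith)⟩
  · obtain ⟨b, hb⟩ := (hUc.inter_right isClosed_Iic).exists_isGreatest hne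
    have hb1 : b ≤ r0 := hb.1.2
    have hbR : b ∈ Icc R₁ R₂ := hUs hb.1.1
    have hsub : ∀ r ∈ Icc b r0, r ∈ Icc R₁ R₂ := fun r hr => ⟨hbR.1.trans hr.1, hr.2.trans hr0.2⟩
    have hyr : ∀ r ∈ Icc b r0, y r ≤ 0 := by
      intro r hr
      have := mv_ge_o (C := 0) hr.2 (fun x hx => hs.dy x (hsub x ⟨hr.1.trans hx.1, hx.2⟩)) (fun x hx =>
        hdy x ⟨hsub x ⟨hr.1.trans hx.1.le, hx.2.le⟩, fun hxU => by
          have := hb.2 ⟨hxU, hx.2.le⟩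
          linarith [hx.1, hr.1]⟩)
      linarith
    have := mv_le (C := 0) hb1 (fun x hx => hs.dw x (hsub x hx)) (fun x hx =>
      div_nonpos_of_nonpos_of_nonneg (hyr x hx) (hpos x).le)
    exact ⟨b, hb.1.1, le_antisymm (hM b hbR) (by linarith)⟩

theorem apriori_J {R₁ R₂ : ℝ} {p Q : ℝ → ℝ} {p0 p1 q1 : ℝ}
    (hc : RCoef p Q p0 p1 q1) {σ τ α β q : ℝ} (h1 : R₁ ≤ σ) (h2 : σ < α) (h3 : α < β) (h4 : β < τ)
    (h5 : τ ≤ R₂) (hq : 0 < q) (hQ0 : ∀ r ∈ Icc σ τ, 0 ≤ Q r) (hQq : ∀ r ∈ Icc α β, q ≤ Q r) :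
    ∃ L > 0, ∃ c > 0, ∀ (h : ℝ → ℝ) (s0 ν : ℝ) (w y : ℝ → ℝ), 0 < s0 → 0 ≤ ν → (∀ s, 0 ≤ h s) →
      (∀ s, s0 ≤ s → L * s ≤ h s) → RSol R₁ R₂ p Q h ν w y → (∀ r ∈ Icc R₁ R₂, 0 ≤ w r) →
      ∀ r0 ∈ Icc σ τ, (∀ r ∈ Icc R₁ R₂, w r ≤ w r0) → c * w r0 ≤ s0 := by
  have hpos : ∀ r, 0 < p r := fun r => hc.p0pos.trans_le (hc.lb r)
  have hp0 := hc.p0pos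
  have hp1 : 0 < p1 := hp0.trans_le ((hc.lb 0).trans (hc.ub 0))
  obtain ⟨d, hd0, hd1, hd2⟩ : ∃ d > 0, d ≤ α - σ ∧ d ≤ τ - β :=
    ⟨min (α - σ) (τ - β), lt_min (by linarith) (by linarith), min_le_left _ _, min_le_right _ _⟩
  set B : ℝ := p1 / p0 * (τ - σ) / d with hB
  have hB0 : 0 < B := by
    have : 0 < τ - σ := by linarith
    positivity
  set c : ℝ := 1 / (1 + B) with hcdef
  have hc0 : 0 < c := by positivity
  set e : ℝ := (β - α) / 3 with he
  have he0 : 0 < e := by rw [he]; linarith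
  refine ⟨4 * p1 / (p0 * q * c * e ^ 2), by positivity, c, hc0, ?_⟩
  set L : ℝ := 4 * p1 / (p0 * q * c * e ^ 2) with hLdef
  have hL0 : 0 < L := by positivity
  intro h s0 ν w y hs0 hν hnn hhL hs hw r0 hr0 hM
  by_contra hcon
  push Not at hcon
  have hJ : ∀ r ∈ Icc σ τ, r ∈ Icc R₁ R₂ := fun r hr => ⟨h1.trans hr.1, hr.2.trans h5⟩
  set M := w r0 with hMdef
  have hM0 : 0 < M := by
    by_contra hh
    push Not at hh
    have := mul_nonpos_of_nonneg_of_nonpos hc0.le hh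
    linarith
  -- derivative bound
  have hdy : ∀ r ∈ Icc σ τ, -(p r * (Q r * h (w r) + max (-w r) 0 + ν * max (Q r) 0)) ≤
      -(p r * (Q r * h (w r))) := by
    intro r hr
    rw [max_eq_right (by linarith [hw r (hJ r hr)])]
    have := mul_nonneg (hpos r).le (mul_nonneg hν (le_max_right (Q r) 0))
    linarith
  have hdy0 : ∀ r ∈ Icc σ τ, -(p r * (Q r * h (w r) + max (-w r) 0 + ν * max (Q r) 0)) ≤ 0 := by
    intro r hr
    refine (hdy r hr).trans ?_
    have := mul_nonneg (hpos r).le (mul_nonneg (hQ0 r hr) (hnn (w r)))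
    linarith
  have hanti : ∀ a ∈ Icc σ τ, ∀ b ∈ Icc σ τ, a ≤ b → y b ≤ y a := by
    intro a ha b hb hab
    have := mv_le (C := 0) hab (fun x hx => hs.dy x (hJ x ⟨ha.1.trans hx.1, hx.2.trans hb.2⟩))
      (fun x hx => hdy0 x ⟨ha.1.trans hx.1, hx.2.trans hb.2⟩)
    linarith
  -- division helpers
  have dneg : ∀ z r, z ≤ 0 → z / p r ≤ z / p1 := by
    intro z r hz
    have := div_le_div_of_nonneg_left (neg_nonneg.2 hz) (hpos r) (hc.ub r)
    rw [neg_div, neg_div] at this; linarith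
  have dpos : ∀ z r, 0 ≤ z → z / p1 ≤ z / p r := fun z r hz =>
    div_le_div_of_nonneg_left hz (hpos r) (hc.ub r)
  have dneg' : ∀ z r, z ≤ 0 → z / p0 ≤ z / p r := by
    intro z r hz
    have := div_le_div_of_nonneg_left (neg_nonneg.2 hz) hp0 (hc.lb r)
    rw [neg_div, neg_div] at this; linarith
  have dpos' : ∀ z r, 0 ≤ z → z / p r ≤ z / p0 := fun z r hz =>
    div_le_div_of_nonneg_left hz hp0 (hc.lb r)
  have dmono : ∀ z z' r, z ≤ z' → z / p r ≤ z' / p r := fun z z' r hz =>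
    div_le_div_of_nonneg_right hz (hpos r).le
  have hmul : ∀ x z, 0 ≤ z → z * d ≤ p1 * w x → z / p0 * (τ - σ) ≤ B * w x := by
    intro x z hz hzd
    have h6 : z ≤ p1 * w x / d := by rw [le_div_iff₀ hd0]; exact hzd
    have : z / p0 * (τ - σ) ≤ (p1 * w x / d) / p0 * (τ - σ) := by
      apply mul_le_mul_of_nonneg_right _ (by linarith)
      exact div_le_div_of_nonneg_right h6 hp0.le
    refine this.trans (le_of_eq ?_)
    rw [hB]; field_simp
  have hlow : ∀ x ∈ Icc α β, c * M ≤ w x := by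
    intro x hx
    have hxJ : x ∈ Icc σ τ := ⟨by linarith [hx.1], by linarith [hx.2]⟩
    have hwx := hw x (hJ x hxJ)
    suffices hsf : M ≤ w x + B * w x by
      rw [hcdef, div_mul_eq_mul_div, div_le_iff₀ (by positivity)]; linarith
    have hBw : 0 ≤ B * w x := by positivity
    rcases le_total r0 x with hrx | hrx
    · have hsub : ∀ t ∈ Icc r0 x, t ∈ Icc σ τ := fun t ht => ⟨hr0.1.trans ht.1, ht.2.trans hxJ.2⟩
      rcases le_total 0 (y x) with hyx | hyx
      · have := mv_ge (C := 0) hrx (fun t ht => hs.dw t (hJ t (hsub t ht))) (fun t ht =>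
          div_nonneg (hyx.trans (hanti t (hsub t ht) x hxJ ht.2)) (hpos t).le)
        linarith
      · have a1 := mv_le (C := y x / p1) hxJ.2 (fun t ht => hs.dw t (hJ t ⟨hxJ.1.trans ht.1, ht.2⟩))
          (fun t ht => (dmono _ _ t (hanti x hxJ t ⟨hxJ.1.trans ht.1, ht.2⟩ ht.1)).trans (dneg _ t hyx))
        have a2 := mv_ge (C := y x / p0) hrx (fun t ht => hs.dw t (hJ t (hsub t ht)))
          (fun t ht => (dneg' _ t hyx).trans (dmono _ _ t (hanti t (hsub t ht) x hxJ ht.2)))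
        have a3 := hw τ (hJ τ ⟨by linarith, le_rfl⟩)
        have a4 : -(y x) * (τ - x) ≤ p1 * w x := by
          have : -(y x) * (τ - x) = p1 * -(y x / p1 * (τ - x)) := by field_simp
          rw [this]; apply mul_le_mul_of_nonneg_left _ hp1.le; linarith
        have a5 : -(y x) * d ≤ -(y x) * (τ - x) :=
          mul_le_mul_of_nonneg_left (by linarith [hx.2]) (by linarith)
        have a6 := hmul x (-(y x)) (by linarith) (a5.trans a4)
        have a7 : -(y x) / p0 * (x - r0) ≤ -(y x) / p0 * (τ - σ) :=
          mul_le_mul_of_nonneg_left (by linarith [hxJ.2, hr0.1]) (div_nonneg (by linarith) hp0.le)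
        rw [neg_div] at a7 a6
        linarith
    · have hsub : ∀ t ∈ Icc x r0, t ∈ Icc σ τ := fun t ht => ⟨hxJ.1.trans ht.1, ht.2.trans hr0.2⟩
      rcases le_total (y x) 0 with hyx | hyx
      · have := mv_le (C := 0) hrx (fun t ht => hs.dw t (hJ t (hsub t ht))) (fun t ht =>
          div_nonpos_of_nonpos_of_nonneg ((hanti x hxJ t (hsub t ht) ht.1).trans hyx) (hpos t).le)
        linarith
      · have a1 := mv_ge (C := y x / p1) hxJ.1 (fun t ht => hs.dw t (hJ t ⟨ht.1, ht.2.trans hxJ.2⟩))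
          (fun t ht => (dpos _ t hyx).trans (dmono _ _ t (hanti t ⟨ht.1, ht.2.trans hxJ.2⟩ x hxJ ht.2)))
        have a2 := mv_le (C := y x / p0) hrx (fun t ht => hs.dw t (hJ t (hsub t ht)))
          (fun t ht => (dmono _ _ t (hanti x hxJ t (hsub t ht) ht.1)).trans (dpos' _ t hyx))
        have a3 := hw σ (hJ σ ⟨le_rfl, by linarith⟩)
        have a4 : y x * (x - σ) ≤ p1 * w x := by
          have : y x * (x - σ) = p1 * (y x / p1 * (x - σ)) := by field_simp
          rw [this]; apply mul_le_mul_of_nonneg_left _ hp1.le; linarith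
        have a5 : y x * d ≤ y x * (x - σ) :=
          mul_le_mul_of_nonneg_left (by linarith [hx.1]) (by linarith)
        have a6 := hmul x (y x) (by linarith) (a5.trans a4)
        have a7 : y x / p0 * (r0 - x) ≤ y x / p0 * (τ - σ) :=
          mul_le_mul_of_nonneg_left (by linarith [hxJ.1, hr0.2]) (div_nonneg (by linarith) hp0.le)
        linarith
  have hAB : ∀ r ∈ Icc α β, r ∈ Icc σ τ := fun r hr => ⟨by linarith [hr.1], by linarith [hr.2]⟩
  have hdyAB : ∀ r ∈ Icc α β, -(p r * (Q r * h (w r) + max (-w r) 0 + ν * max (Q r) 0)) ≤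
      -(p0 * (q * (L * (c * M)))) := by
    intro r hr
    refine (hdy r (hAB r hr)).trans (neg_le_neg ?_)
    have e1 := hlow r hr
    have e2 : L * (c * M) ≤ h (w r) :=
      (mul_le_mul_of_nonneg_left e1 hL0.le).trans (hhL _ (by linarith))
    have e3 : q * (L * (c * M)) ≤ Q r * h (w r) :=
      mul_le_mul (hQq r hr) e2 (by positivity) (hQ0 r (hAB r hr))
    exact mul_le_mul (hc.lb r) e3 (by positivity) (hpos r).le
  set Z : ℝ := p0 * (q * (L * (c * M))) * e / 2 with hZ
  have hZval : Z / p1 * e = 2 * M := by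
    rw [hZ, hLdef]; field_simp; ring
  have hZ0 : 0 ≤ Z := by positivity
  have hβ : β = α + 3 * e := by rw [he]; ring
  have b1 := mv_le (a := α + e) (b := α + 2 * e) (by linarith)
    (fun x hx => hs.dy x (hJ x (hAB x ⟨by linarith [hx.1], by linarith [hx.2]⟩)))
    (fun x hx => hdyAB x ⟨by linarith [hx.1], by linarith [hx.2]⟩)
  have b2 : y (α + 2 * e) - y (α + e) ≤ - (2 * Z) := by
    refine b1.trans (le_of_eq ?_); rw [hZ]; ring
  have hα' : α ∈ Icc α β := ⟨le_rfl, h3.le⟩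
  have hβ' : β ∈ Icc α β := ⟨h3.le, le_rfl⟩
  have ht1 : α + e ∈ Icc α β := ⟨by linarith, by linarith⟩
  have ht2 : α + 2 * e ∈ Icc α β := ⟨by linarith, by linarith⟩
  rcases le_total Z (y (α + e)) with hyc | hyc
  · have b3 := mv_ge (a := α) (b := α + e) (C := Z / p1) (by linarith)
      (fun x hx => hs.dw x (hJ x (hAB x ⟨hx.1, by linarith [hx.2]⟩)))
      (fun x hx => (dpos _ x hZ0).trans (dmono _ _ x (hyc.trans
        (hanti x (hAB x ⟨hx.1, by linarith [hx.2]⟩) _ (hAB _ ht1) hx.2))))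
    have b4 := hM _ (hJ _ (hAB _ ht1))
    have b5 := hw _ (hJ _ (hAB _ hα'))
    have : Z / p1 * (α + e - α) = 2 * M := by rw [← hZval]; ring
    linarith
  · have b3 := mv_le (a := α + 2 * e) (b := β) (C := (-Z) / p1) (by linarith)
      (fun x hx => hs.dw x (hJ x (hAB x ⟨by linarith [hx.1], hx.2⟩)))
      (fun x hx => (dmono _ (-Z) x ((hanti _ (hAB _ ht2) x (hAB x ⟨by linarith [hx.1], hx.2⟩) hx.1).trans
        (by linarith))).trans (dneg _ x (by linarith)))
    have b4 := hM _ (hJ _ (hAB _ ht2))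
    have b5 := hw _ (hJ _ (hAB _ hβ'))
    have : (-Z) / p1 * (β - (α + 2 * e)) = - (2 * M) := by rw [← hZval, hβ]; ring
    linarith

theorem q_sub {R₁ R₂ : ℝ} (hR : R₁ < R₂) {Q : ℝ → ℝ} (hQ : Continuous Q) {m : ℕ} {σ τ : Fin m → ℝ}
    (hb : ∀ i, R₁ ≤ σ i ∧ σ i ≤ τ i ∧ τ i ≤ R₂)
    (hdisj : Pairwise fun i j => Disjoint (Icc (σ i) (τ i)) (Icc (σ j) (τ j)))
    (hpos : ∀ i, ∃ r ∈ Icc (σ i) (τ i), 0 < Q r)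
    (hneg : ∀ r ∈ Icc R₁ R₂ \ ⋃ i, Icc (σ i) (τ i), Q r ≤ 0) (i : Fin m) :
    ∃ α β q, σ i < α ∧ α < β ∧ β < τ i ∧ 0 < q ∧ ∀ r ∈ Icc α β, q ≤ Q r := by
  obtain ⟨ρ, hρ, hQρ⟩ := hpos i
  obtain ⟨d, hd, hball⟩ : ∃ d > 0, ∀ r, |r - ρ| < d → Q ρ / 2 < Q r := by
    have : ∀ᶠ r in nhds ρ, Q ρ / 2 < Q r := hQ.continuousAt.eventually (lt_mem_nhds (by linarith))
    obtain ⟨d, hd, h⟩ := Metric.eventually_nhds_iff.1 this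
    exact ⟨d, hd, fun r hr => h (by rwa [Real.dist_eq])⟩
  have hlt : σ i < τ i := by
    rcases (hb i).2.1.eq_or_lt with e | h
    swap
    · exact h
    exfalso
    have hρσ : ρ = σ i := le_antisymm (by rw [e]; exact hρ.2) hρ.1
    have hcl : IsClosed (⋃ j ∈ {j : Fin m | j ≠ i}, Icc (σ j) (τ j)) :=
      (Set.toFinite _).isClosed_biUnion fun j _ => isClosed_Icc
    have hnot : ρ ∉ (⋃ j ∈ {j : Fin m | j ≠ i}, Icc (σ j) (τ j)) := by
      intro hmem
      simp only [mem_iUnion] at hmem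
      obtain ⟨j, hj, hmem⟩ := hmem
      exact (Set.disjoint_left.1 (hdisj hj)) hmem hρ
    have hev : ∀ᶠ r in nhds ρ, r ∉ (⋃ j ∈ {j : Fin m | j ≠ i}, Icc (σ j) (τ j)) ∧ 0 < Q r :=
      (show ∀ᶠ r in nhds ρ, r ∉ _ from hcl.isOpen_compl.mem_nhds hnot).and (hQ.continuousAt.eventually (lt_mem_nhds hQρ))
    have hρR : ρ ∈ Icc R₁ R₂ := ⟨(hb i).1.trans hρ.1, hρ.2.trans (hb i).2.2⟩
    have hex : ∃ r, r ∈ Icc R₁ R₂ ∧ r ≠ ρ ∧ r ∉ (⋃ j ∈ {j : Fin m | j ≠ i}, Icc (σ j) (τ j)) ∧ 0 < Q r := by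
      rcases hρR.2.eq_or_lt with e2 | h2
      · have h3 : R₁ < ρ := by rw [e2]; exact hR
        have hev' := hev.filter_mono (nhdsWithin_le_nhds (s := Iio ρ))
        obtain ⟨r, h4, h5⟩ := (hev'.and (Ioo_mem_nhdsLT h3)).exists
        exact ⟨r, ⟨h5.1.le, h5.2.le.trans hρR.2⟩, h5.2.ne, h4⟩
      · have hev' := hev.filter_mono (nhdsWithin_le_nhds (s := Ioi ρ))
        obtain ⟨r, h4, h5⟩ := (hev'.and (Ioo_mem_nhdsGT h2)).exists
        exact ⟨r, ⟨hρR.1.trans h5.1.le, h5.2.le⟩, h5.1.ne', h4⟩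
    obtain ⟨r, hr1, hr2, hr3, hr4⟩ := hex
    have := hneg r ⟨hr1, fun hmem => by
      obtain ⟨j, hj⟩ := mem_iUnion.1 hmem
      by_cases hji : j = i
      · subst hji
        apply hr2
        rw [hρσ]
        exact le_antisymm (by rw [e]; exact hj.2) hj.1
      · exact hr3 (mem_iUnion₂.2 ⟨j, hji, hj⟩)⟩
    linarith
  set A := max (σ i) (ρ - d) with hA
  set B := min (τ i) (ρ + d) with hB
  have hAB : A < B := by
    apply max_lt <;> apply lt_min
    · exact hlt
    · linarith [hρ.1]
    · linarith [hρ.2]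
    · linarith
  have e1 : σ i ≤ A := le_max_left _ _
  have e2 : ρ - d ≤ A := le_max_right _ _
  have e3 : B ≤ τ i := min_le_left _ _
  have e4 : B ≤ ρ + d := min_le_right _ _
  refine ⟨A + (B - A) / 3, A + 2 * (B - A) / 3, Q ρ / 2, by linarith, by linarith, by linarith,
    by linarith, fun r hr => (hball r ?_).le⟩
  rw [abs_lt]
  constructor <;> linarith [hr.1, hr.2]

theorem apriori {R₁ R₂ : ℝ} (hR : R₁ < R₂) {p Q : ℝ → ℝ} {p0 p1 q1 : ℝ}
    (hc : RCoef p Q p0 p1 q1) (hq : CondQ1 R₁ R₂ Q) :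
    ∃ L > 0, ∃ c > 0, ∀ (h : ℝ → ℝ) (s0 ν : ℝ) (w y : ℝ → ℝ), 0 < s0 → 0 ≤ ν → (∀ s, 0 ≤ h s) →
      (∀ s, s0 ≤ s → L * s ≤ h s) → RSol R₁ R₂ p Q h ν w y → y R₁ = 0 → y R₂ = 0 →
      (∀ r ∈ Icc R₁ R₂, 0 ≤ w r) → ∀ r ∈ Icc R₁ R₂, c * w r ≤ s0 := by
  obtain ⟨m, σ, τ, hm, hb, hdisj, hQ0, hpos, hneg⟩ := hq
  have key : ∀ i, ∃ L > 0, ∃ c > 0, ∀ (h : ℝ → ℝ) (s0 ν : ℝ) (w y : ℝ → ℝ), 0 < s0 → 0 ≤ ν →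
      (∀ s, 0 ≤ h s) →
      (∀ s, s0 ≤ s → L * s ≤ h s) → RSol R₁ R₂ p Q h ν w y → (∀ r ∈ Icc R₁ R₂, 0 ≤ w r) →
      ∀ r0 ∈ Icc (σ i) (τ i), (∀ r ∈ Icc R₁ R₂, w r ≤ w r0) → c * w r0 ≤ s0 := by
    intro i
    obtain ⟨α, β, q, h1, h2, h3, h4, h5⟩ := q_sub hR hc.hQ hb hdisj hpos hneg i
    exact apriori_J hc (hb i).1 h1 h2 h3 (hb i).2.2 h4 (hQ0 i) h5
  choose L hL c hc' hkey using key
  have hne : Nonempty (Fin m) := ⟨⟨0, hm⟩⟩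
  obtain ⟨L', hL'⟩ : ∃ L', ∀ i, L i ≤ L' := ⟨_, fun i => le_ciSup (Finite.bddAbove_range L) i⟩
  obtain ⟨i0, hi0⟩ := Finite.exists_min c
  refine ⟨L', (hL i0).trans_le (hL' i0), c i0, hc' i0, ?_⟩
  intro h s0 ν w y hs0 hν hnn hhL hs hy hy2 hw r hr
  have hwc : ContinuousOn w (Icc R₁ R₂) := fun r hr => (hs.dw r hr).continuousAt.continuousWithinAt
  obtain ⟨r0, hr0, hmax⟩ := isCompact_Icc.exists_isMaxOn (⟨r, hr⟩ : (Icc R₁ R₂).Nonempty) hwc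
  have hmax' : ∀ r ∈ Icc R₁ R₂, w r ≤ w r0 := fun r hr => hmax hr
  obtain ⟨r1, hr1, hw1⟩ := max_in_J hc hnn hs hy hy2 hw (U := ⋃ i, Icc (σ i) (τ i))
    (isClosed_iUnion_of_finite fun i => isClosed_Icc)
    (by obtain ⟨i⟩ := hne
        exact ⟨σ i, mem_iUnion.2 ⟨i, le_rfl, (hb i).2.1⟩⟩)
    (iUnion_subset fun i => Icc_subset_Icc (hb i).1 (hb i).2.2) hneg hr0 hmax'
  obtain ⟨i, hi⟩ := mem_iUnion.1 hr1
  have h1 := hkey i h s0 ν w y hs0 hν hnn (fun s hs => le_trans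
    (mul_le_mul_of_nonneg_right (hL' i) (hs0.le.trans hs)) (hhL s hs)) hs hw r1 hi
    (fun r hr => by rw [hw1]; exact hmax' r hr)
  rw [hw1] at h1
  have h2 : c i0 * w r ≤ c i * w r0 :=
    mul_le_mul (hi0 i) (hmax' r hr) (hw r hr) (hc' i).le
  linarith

theorem nu_bound {R₁ R₂ : ℝ} {p Q : ℝ → ℝ} {p0 p1 q1 : ℝ}
    (hc : RCoef p Q p0 p1 q1) {α β q : ℝ} (h1 : R₁ ≤ α) (h2 : α < β) (h3 : β ≤ R₂) (hq : 0 < q)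
    (hQq : ∀ r ∈ Icc α β, q ≤ Q r) {h : ℝ → ℝ} (hnn : ∀ s, 0 ≤ h s) {G ν : ℝ} (hν : 0 ≤ ν)
    {w y : ℝ → ℝ} (hs : RSol R₁ R₂ p Q h ν w y) (hy : y R₁ = 0) (hy2 : y R₂ = 0)
    (hw : ∀ r ∈ Icc R₁ R₂, 0 ≤ w r) (hG : ∀ r ∈ Icc R₁ R₂, h (w r) ≤ G) :
    ν * (p0 * q * (β - α)) ≤ p1 * q1 * G * (R₂ - R₁) := by
  have hpos : ∀ r, 0 < p r := fun r => hc.p0pos.trans_le (hc.lb r)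
  have hp0 := hc.p0pos
  have hp1 : 0 < p1 := hp0.trans_le ((hc.lb 0).trans (hc.ub 0))
  have hq1 : 0 ≤ q1 := (abs_nonneg _).trans (hc.qb 0)
  have hG0 : 0 ≤ G := (hnn _).trans (hG R₁ ⟨le_rfl, by linarith⟩)
  have d1 : ∀ r ∈ Icc R₁ R₂, -(p r * (Q r * h (w r) + max (-w r) 0 + ν * max (Q r) 0)) ≤
      p1 * q1 * G := by
    intro r hr
    rw [max_eq_right (by linarith [hw r hr])]
    have e1 := mul_nonneg (hpos r).le (mul_nonneg hν (le_max_right (Q r) 0))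
    have e2 : -(Q r) * h (w r) ≤ q1 * G :=
      mul_le_mul ((neg_le_abs _).trans (hc.qb r)) (hG r hr) (hnn _) hq1
    have e3 : p r * (-(Q r) * h (w r)) ≤ p r * (q1 * G) := mul_le_mul_of_nonneg_left e2 (hpos r).le
    have e4 : p r * (q1 * G) ≤ p1 * (q1 * G) := mul_le_mul_of_nonneg_right (hc.ub r) (by positivity)
    linarith
  have d2 : ∀ r ∈ Icc α β, -(p r * (Q r * h (w r) + max (-w r) 0 + ν * max (Q r) 0)) ≤
      -(p0 * (ν * q)) := by
    intro r hr
    have hQr := hQq r hr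
    rw [max_eq_right (by linarith [hw r ⟨h1.trans hr.1, hr.2.trans h3⟩]), max_eq_left (by linarith)]
    have e1 : 0 ≤ p r * (Q r * h (w r)) := mul_nonneg (hpos r).le (mul_nonneg (by linarith) (hnn _))
    have e2 : p0 * (ν * q) ≤ p r * (ν * Q r) :=
      mul_le_mul (hc.lb r) (mul_le_mul_of_nonneg_left hQr hν) (by positivity) (hpos r).le
    linarith
  have m1 := mv_le h1 (fun r hr => hs.dy r ⟨hr.1, by linarith [hr.2]⟩)
    (fun r hr => d1 r ⟨hr.1, by linarith [hr.2]⟩)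
  have m2 := mv_le h2.le (fun r hr => hs.dy r ⟨by linarith [hr.1], by linarith [hr.2]⟩) d2
  have m3 := mv_le h3 (fun r hr => hs.dy r ⟨by linarith [hr.1], hr.2⟩)
    (fun r hr => d1 r ⟨by linarith [hr.1], hr.2⟩)
  have : 0 ≤ p1 * q1 * G * (β - α) := mul_nonneg (by positivity) (by linarith)
  nlinarith

theorem ivt_zero {f : ℝ → ℝ} (hf : Continuous f) {a b : ℝ} (hab : a ≤ b)
    (h : (f a ≤ 0 ∧ 0 ≤ f b) ∨ (0 ≤ f a ∧ f b ≤ 0)) : ∃ x ∈ Icc a b, f x = 0 := by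
  rcases h with h | h
  · exact intermediate_value_Icc hab hf.continuousOn h
  · exact intermediate_value_Icc' hab hf.continuousOn ⟨h.2, h.1⟩

theorem shoot {R₁ R₂ : ℝ} (hR : R₁ < R₂) {p Q : ℝ → ℝ} {p0 p1 q1 : ℝ}
    (hc : RCoef p Q p0 p1 q1) (hq : CondQ1 R₁ R₂ Q) {L c : ℝ} (hc0 : 0 < c)
    (hap : ∀ (h : ℝ → ℝ) (s0 ν : ℝ) (w y : ℝ → ℝ), 0 < s0 → 0 ≤ ν → (∀ s, 0 ≤ h s) →
      (∀ s, s0 ≤ s → L * s ≤ h s) → RSol R₁ R₂ p Q h ν w y → y R₁ = 0 → y R₂ = 0 →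
      (∀ r ∈ Icc R₁ R₂, 0 ≤ w r) → ∀ r ∈ Icc R₁ R₂, c * w r ≤ s0)
    {h : ℝ → ℝ} {k s0 δ : ℝ} (hk : 0 ≤ k) (hh : ∀ s t, |h s - h t| ≤ k * |s - t|)
    (h0 : ∀ s ≤ 0, h s = 0) (hnn : ∀ s, 0 ≤ h s) (hs0 : 0 < s0) (hhL : ∀ s, s0 ≤ s → L * s ≤ h s)
    (hδ : 0 < δ)
    (hsmall : ∀ w y, RSol R₁ R₂ p Q h 0 w y → w R₁ = δ → y R₁ = 0 → 0 < y R₂) :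
    ∃ w y, RSol R₁ R₂ p Q h 0 w y ∧ y R₁ = 0 ∧ y R₂ = 0 ∧ δ ≤ w R₁ ∧
      (∀ r ∈ Icc R₁ R₂, 0 ≤ w r) ∧ (∀ r ∈ Icc R₁ R₂, c * w r ≤ s0) := by
  have hp0 := hc.p0pos
  have hp1 : 0 < p1 := hp0.trans_le ((hc.lb 0).trans (hc.ub 0))
  have hq1 : 0 ≤ q1 := (abs_nonneg _).trans (hc.qb 0)
  have hlm : R₁ ∈ Icc R₁ R₂ := ⟨le_rfl, hR.le⟩
  have hex := fun a ν => rsol_exists hR hc hk hh a ν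
  choose W Y hS hWa hY0 using hex
  obtain ⟨C, hC0, hC⟩ := rsol_dep hR hc hk hh
  set F : ℝ → ℝ → ℝ := fun a ν => Y a ν R₂ with hF
  have hFL : ∀ a ν a' ν', |F a ν - F a' ν'| ≤ C * (|a - a'| + |ν - ν'|) := fun a ν a' ν' =>
    hC a ν a' ν' _ _ _ _ (hS a ν) (hWa a ν) (hY0 a ν) (hS a' ν') (hWa a' ν') (hY0 a' ν')
  have hFa : ∀ ν, Continuous fun a => F a ν := fun ν =>
    (LipschitzWith.of_dist_le_mul (K := ⟨C, hC0⟩) fun a a' => by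
      have := hFL a ν a' ν
      simp only [sub_self, abs_zero, add_zero] at this
      rw [Real.dist_eq, Real.dist_eq]; exact this).continuous
  have hFν : ∀ a, Continuous fun ν => F a ν := fun a =>
    (LipschitzWith.of_dist_le_mul (K := ⟨C, hC0⟩) fun ν ν' => by
      have := hFL a ν a ν'
      simp only [sub_self, abs_zero, zero_add] at this
      rw [Real.dist_eq, Real.dist_eq]; exact this).continuous
  have hsolnn : ∀ a ν, 0 ≤ ν → F a ν = 0 → ∀ r ∈ Icc R₁ R₂, 0 ≤ W a ν r := fun a ν hν hz =>
    rsol_nonneg hR hc h0 hν (hS a ν) (hY0 a ν) hz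
  have hsolb : ∀ a ν, 0 ≤ ν → F a ν = 0 → ∀ r ∈ Icc R₁ R₂, c * W a ν r ≤ s0 := fun a ν hν hz =>
    hap h s0 ν _ _ hs0 hν hnn hhL (hS a ν) (hY0 a ν) hz (hsolnn a ν hν hz)
  set A : ℝ := s0 / c + δ + 1 with hA
  have hA0 : 0 < s0 / c := by positivity
  have hFA : ∀ ν, 0 ≤ ν → F A ν ≠ 0 := by
    intro ν hν hz
    have := hsolb A ν hν hz R₁ hlm
    rw [hWa] at this
    have e : c * A = s0 + c * (δ + 1) := by rw [hA]; field_simp; ring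
    have : 0 < c * (δ + 1) := by positivity
    linarith
  -- no solutions for large ν
  obtain ⟨ν0, hν0, hFν0⟩ : ∃ ν0 : ℝ, 0 ≤ ν0 ∧ ∀ a, F a ν0 ≠ 0 := by
    obtain ⟨m, σ, τ, hm, hb, hdisj, hQ0, hpos, hneg⟩ := hq
    obtain ⟨α, β, q, h1, h2, h3, h4, h5⟩ := q_sub hR hc.hQ hb hdisj hpos hneg ⟨0, hm⟩
    set G : ℝ := k * (s0 / c) with hG
    have hG0 : 0 ≤ G := by positivity
    have hD : 0 < p0 * q * (β - α) := mul_pos (by positivity) (by linarith)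
    have hN : 0 ≤ p1 * q1 * G * (R₂ - R₁) := mul_nonneg (by positivity) (by linarith)
    refine ⟨p1 * q1 * G * (R₂ - R₁) / (p0 * q * (β - α)) + 1, by positivity, ?_⟩
    set ν0 := p1 * q1 * G * (R₂ - R₁) / (p0 * q * (β - α)) + 1 with hν0
    intro a hz
    have hν0' : 0 ≤ ν0 := by positivity
    have hnnw := hsolnn a ν0 hν0' hz
    have := nu_bound hc (h1.le.trans' (hb _).1) h2 (h3.le.trans (hb _).2.2) h4 h5 hnn hν0' (hS a ν0)
      (hY0 a ν0) hz hnnw (G := G) (fun r hr => by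
        have e1 := hsolb a ν0 hν0' hz r hr
        have e2 := hh (W a ν0 r) 0
        rw [h0 0 le_rfl, sub_zero, sub_zero, abs_of_nonneg (hnn _), abs_of_nonneg (hnnw r hr)] at e2
        refine e2.trans (mul_le_mul_of_nonneg_left ?_ hk)
        rw [le_div_iff₀ hc0]; linarith)
    have e : ν0 * (p0 * q * (β - α)) = p1 * q1 * G * (R₂ - R₁) + p0 * q * (β - α) := by
      rw [hν0, add_mul, div_mul_cancel₀ _ hD.ne', one_mul]
    linarith
  have hm1 : F (-1) ν0 < 0 := by
    have := rsol_neg hc h0 hν0 (hS (-1) ν0) (hY0 (-1) ν0) (r₁ := R₁) ⟨le_rfl, hR⟩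
      (by rw [hWa]; norm_num)
    exact this
  have hAν0 : F A ν0 < 0 := by
    by_contra hcon
    push Not at hcon
    obtain ⟨x, _, hx⟩ := ivt_zero (hFa ν0) (a := -1) (b := A) (by linarith) (Or.inl ⟨hm1.le, hcon⟩)
    exact hFν0 x hx
  have hA00 : F A 0 < 0 := by
    by_contra hcon
    push Not at hcon
    obtain ⟨x, hx1, hx⟩ := ivt_zero (hFν A) hν0 (Or.inr ⟨hcon, hAν0.le⟩)
    exact hFA x hx1.1 hx
  have hδ0 : 0 < F δ 0 := hsmall _ _ (hS δ 0) (hWa _ _) (hY0 _ _)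
  obtain ⟨a, ha, hz⟩ := ivt_zero (hFa 0) (a := δ) (b := A) (by linarith) (Or.inr ⟨hδ0.le, hA00.le⟩)
  exact ⟨W a 0, Y a 0, hS a 0, hY0 a 0, hz, by rw [hWa]; exact ha.1, hsolnn a 0 le_rfl hz,
    hsolb a 0 le_rfl hz⟩

theorem small_a {R₁ R₂ : ℝ} (hR : R₁ < R₂) {p Q : ℝ → ℝ} {p0 p1 q1 : ℝ}
    (hc : RCoef p Q p0 p1 q1) (hI : ∫ r in R₁..R₂, p r * Q r < 0) :
    ∃ κ > 0, ∀ (h : ℝ → ℝ) (δ : ℝ), 0 < δ → h 0 = 0 → 0 < h δ →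
      (∀ s ∈ Icc 0 (2 * δ), ∀ t ∈ Icc 0 (2 * δ), |h s - h t| ≤ κ * |s - t|) →
      ∀ w y, RSol R₁ R₂ p Q h 0 w y → w R₁ = δ → y R₁ = 0 → 0 < y R₂ := by
  have hpos : ∀ r, 0 < p r := fun r => hc.p0pos.trans_le (hc.lb r)
  have hp0 := hc.p0pos
  have hp1 : 0 < p1 := hp0.trans_le ((hc.lb 0).trans (hc.ub 0))
  have hq1 : 0 ≤ q1 := (abs_nonneg _).trans (hc.qb 0)
  set I := ∫ r in R₁..R₂, p r * Q r with hIdef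
  set T := R₂ - R₁ with hT
  have hT0 : 0 < T := sub_pos.2 hR
  set P := p1 * q1 with hP
  have hP0 : 0 ≤ P := by positivity
  set B := P * T * T / p0 with hB
  have hB0 : 0 ≤ B := by positivity
  obtain ⟨κ, hκ, hκ1, hκ2⟩ : ∃ κ > 0, B * κ ≤ 1 / 4 ∧ P * T * (2 * B) * κ < -I := by
    have e1 : 0 ≤ P * T * (2 * B) := by positivity
    refine ⟨min (1 / (4 * (B + 1))) (-I / (P * T * (2 * B) + 1)), ?_, ?_, ?_⟩
    · apply lt_min
      · positivity
      · exact div_pos (by linarith) (by linarith)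
    · refine (mul_le_mul_of_nonneg_left (min_le_left _ _) hB0).trans ?_
      rw [mul_one_div, div_le_div_iff₀ (by positivity) (by norm_num)]; linarith
    · refine (mul_le_mul_of_nonneg_left (min_le_right _ _) e1).trans_lt ?_
      rw [mul_div_assoc', div_lt_iff₀ (by linarith)]
      nlinarith
  refine ⟨κ, hκ, ?_⟩
  intro h δ hδ h0 hhδ hlip w y hs hw hy
  have hhδκ : h δ ≤ κ * δ := by
    have := hlip δ ⟨hδ.le, by linarith⟩ 0 ⟨le_rfl, by linarith⟩
    rwa [h0, sub_zero, sub_zero, abs_of_pos hδ, abs_of_pos hhδ] at this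
  have hwc : ContinuousOn w (Icc R₁ R₂) := fun r hr => (hs.dw r hr).continuousAt.continuousWithinAt
  have hQp : ∀ r z, |p r * (Q r * z)| ≤ P * |z| := by
    intro r z
    rw [abs_mul, abs_mul, abs_of_pos (hpos r), ← mul_assoc]
    exact mul_le_mul_of_nonneg_right
      (mul_le_mul (hc.ub r) (hc.qb r) (abs_nonneg _) hp1.le) (abs_nonneg _)
  have hboot : ∀ r1 ∈ Icc R₁ R₂, (∀ r ∈ Icc R₁ r1, |w r - δ| ≤ δ) →
      ∀ r ∈ Icc R₁ r1, |w r - δ| ≤ 2 * B * h δ := by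
    intro r1 hr1 hb
    have hsub : ∀ r ∈ Icc R₁ r1, r ∈ Icc R₁ R₂ := fun r hr => ⟨hr.1, hr.2.trans hr1.2⟩
    obtain ⟨ρ, hρ, hmax⟩ := isCompact_Icc.exists_isMaxOn (⟨R₁, le_rfl, hr1.1⟩ : (Icc R₁ r1).Nonempty)
      (((hwc.mono (Icc_subset_Icc_right hr1.2)).sub continuousOn_const).abs (f := fun r => w r - δ))
    set M := |w ρ - δ| with hM
    have hM0 : 0 ≤ M := abs_nonneg _
    have hmax' : ∀ r ∈ Icc R₁ r1, |w r - δ| ≤ M := fun r hr => hmax hr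
    have hmem : ∀ r ∈ Icc R₁ r1, w r ∈ Icc 0 (2 * δ) := by
      intro r hr
      have := abs_le.1 (hb r hr)
      constructor <;> linarith
    have hhw : ∀ r ∈ Icc R₁ r1, |h (w r)| ≤ h δ + κ * M := by
      intro r hr
      have e1 := hlip (w r) (hmem r hr) δ ⟨hδ.le, by linarith⟩
      have e2 := mul_le_mul_of_nonneg_left (hmax' r hr) hκ.le
      have e3 : |h (w r)| ≤ |h (w r) - h δ| + |h δ| := by
        have := abs_add_le (h (w r) - h δ) (h δ); simpa using this
      rw [abs_of_pos hhδ] at e3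
      linarith
    have hy' : ∀ r ∈ Icc R₁ r1, |y r| ≤ P * (h δ + κ * M) * T := by
      intro r hr
      have := mv_abs (C := P * (h δ + κ * M)) hr.1 (fun x hx => hs.dy x (hsub x ⟨hx.1, hx.2.trans hr.2⟩))
        (fun x hx => by
          have hx' : x ∈ Icc R₁ r1 := ⟨hx.1, hx.2.trans hr.2⟩
          rw [max_eq_right (by linarith [(hmem x hx').1]), zero_mul, add_zero, add_zero, abs_neg]
          exact (hQp _ _).trans (mul_le_mul_of_nonneg_left (hhw x hx') hP0))
      rw [hy, sub_zero] at this
      refine this.trans (mul_le_mul_of_nonneg_left ?_ (by positivity))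
      linarith [hr.2, hr1.2]
    have hwρ : M ≤ B * (h δ + κ * M) := by
      have := mv_abs (C := P * (h δ + κ * M) * T / p0) hρ.1
        (fun x hx => hs.dw x (hsub x ⟨hx.1, hx.2.trans hρ.2⟩))
        (fun x hx => by
          rw [abs_div, abs_of_pos (hpos x)]
          exact div_le_div₀ (by positivity) (hy' x ⟨hx.1, hx.2.trans hρ.2⟩) hp0 (hc.lb x))
      rw [hw] at this
      refine this.trans ?_
      have e : B * (h δ + κ * M) = P * (h δ + κ * M) * T / p0 * T := by rw [hB]; field_simp
      rw [e]
      refine mul_le_mul_of_nonneg_left ?_ (by positivity)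
      linarith [hρ.2, hr1.2]
    intro r hr
    refine (hmax' r hr).trans ?_
    have e1 : B * κ * M ≤ 1 / 4 * M := mul_le_mul_of_nonneg_right hκ1 hM0
    have e2 : 0 ≤ B * h δ := by positivity
    nlinarith
  have hBδ : 2 * B * h δ ≤ δ / 2 := by
    have := mul_le_mul_of_nonneg_left hhδκ hB0
    have := mul_le_mul_of_nonneg_right hκ1 hδ.le
    nlinarith
  have hall : ∀ r ∈ Icc R₁ R₂, |w r - δ| ≤ δ := by
    by_contra hcon
    push Not at hcon
    obtain ⟨r', hr', hw'⟩ := hcon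
    have hcl : IsCompact (Icc R₁ R₂ ∩ (fun r => |w r - δ|) ⁻¹' Ici δ) := by
      have : IsClosed (Icc R₁ R₂ ∩ (fun r => |w r - δ|) ⁻¹' Ici δ) :=
        ((hwc.sub continuousOn_const).abs).preimage_isClosed_of_isClosed isClosed_Icc isClosed_Ici
      exact isCompact_Icc.of_isClosed_subset this inter_subset_left
    obtain ⟨r2, hr2⟩ := hcl.exists_isLeast ⟨r', hr', hw'.le⟩
    have hge : δ ≤ |w r2 - δ| := hr2.1.2
    have h1 : ∀ r ∈ Ico R₁ r2, |w r - δ| ≤ δ := by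
      intro r hr
      by_contra hh
      push Not at hh
      have := hr2.2 ⟨⟨hr.1, hr.2.le.trans hr2.1.1.2⟩, hh.le⟩
      linarith [hr.2]
    have hne : R₁ < r2 := by
      rcases hr2.1.1.1.eq_or_lt with e | h
      · rw [← e, hw, sub_self, abs_zero] at hge; linarith
      · exact h
    have hlt : ∀ r ∈ Icc R₁ r2, |w r - δ| ≤ δ := by
      intro r hr
      rcases hr.2.eq_or_lt with e | hlt
      · subst e
        have hcw : Tendsto (fun r => |w r - δ|) (nhdsWithin r (Iio r)) (nhds (|w r - δ|)) :=
          ((hs.dw r hr2.1.1).continuousAt.sub continuousAt_const).abs.tendsto.mono_left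
            nhdsWithin_le_nhds
        refine le_of_tendsto hcw ?_
        filter_upwards [Ioo_mem_nhdsLT hne] with x hx using h1 x ⟨hx.1.le, hx.2⟩
      · exact h1 r ⟨hr.1, hlt⟩
    have := hboot r2 hr2.1.1 hlt r2 ⟨hne.le, le_rfl⟩
    linarith
  have hfin := hboot R₂ ⟨hR.le, le_rfl⟩ hall
  have hpQ : Continuous fun r => p r * Q r := hc.hp.mul hc.hQ
  have hz : ∀ r ∈ Icc R₁ R₂, HasDerivAt (fun r => y r + h δ * ∫ x in R₁..r, p x * Q x)
      (-(p r * (Q r * h (w r) + max (-w r) 0 + 0 * max (Q r) 0)) + h δ * (p r * Q r)) r := by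
    intro r hr
    exact (hs.dy r hr).add ((hpQ.integral_hasStrictDerivAt R₁ r).hasDerivAt.const_mul (h δ))
  have hfinal := mv_abs (C := P * (κ * (2 * B * h δ))) hR.le hz (fun r hr => by
    have e0 := abs_le.1 (hall r hr)
    rw [max_eq_right (by linarith), zero_mul, add_zero, add_zero]
    have e1 : -(p r * (Q r * h (w r))) + h δ * (p r * Q r) = -(p r * (Q r * (h (w r) - h δ))) := by ring
    rw [e1, abs_neg]
    refine (hQp _ _).trans (mul_le_mul_of_nonneg_left ?_ hP0)
    refine (hlip (w r) ⟨by linarith, by linarith⟩ δ ⟨hδ.le, by linarith⟩).trans ?_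
    exact mul_le_mul_of_nonneg_left (hfin r hr) hκ.le)
  simp only [hy, intervalIntegral.integral_same, mul_zero, add_zero, sub_zero] at hfinal
  rw [← hIdef] at hfinal
  have e2 := (abs_le.1 hfinal).1
  have e3 := mul_lt_mul_of_pos_right hκ2 hhδ
  have e4 : P * (κ * (2 * B * h δ)) * (R₂ - R₁) = P * T * (2 * B) * κ * h δ := by rw [← hT]; ring
  rw [e4] at e2
  linarith

/-- globally Lipschitz -/
def GLip (f : ℝ → ℝ) : Prop := ∃ k : ℝ, 0 ≤ k ∧ ∀ s t, |f s - f t| ≤ k * |s - t|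

theorem GLip.add {f g : ℝ → ℝ} (hf : GLip f) (hg : GLip g) : GLip fun s => f s + g s := by
  obtain ⟨k, hk, h1⟩ := hf
  obtain ⟨l, hl, h2⟩ := hg
  refine ⟨k + l, by linarith, fun s t => ?_⟩
  have : f s + g s - (f t + g t) = (f s - f t) + (g s - g t) := by ring
  rw [this, add_mul]
  exact (abs_add_le _ _).trans (add_le_add (h1 s t) (h2 s t))

theorem GLip.const_mul {f : ℝ → ℝ} (hf : GLip f) (c : ℝ) : GLip fun s => c * f s := by
  obtain ⟨k, hk, h1⟩ := hf
  refine ⟨|c| * k, by positivity, fun s t => ?_⟩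
  rw [← mul_sub, abs_mul, mul_assoc]
  exact mul_le_mul_of_nonneg_left (h1 s t) (abs_nonneg _)

theorem GLip.max_const {f : ℝ → ℝ} (hf : GLip f) (c : ℝ) : GLip fun s => max (f s) c := by
  obtain ⟨k, hk, h1⟩ := hf
  exact ⟨k, hk, fun s t => (abs_max_sub_max_le_abs _ _ _).trans (h1 s t)⟩

theorem GLip.neg {f : ℝ → ℝ} (hf : GLip f) : GLip fun s => - f s := by
  have := hf.const_mul (-1)
  simpa using this

theorem GLip.min_const {f : ℝ → ℝ} (hf : GLip f) (c : ℝ) : GLip fun s => min (f s) c := by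
  have h := (hf.neg.max_const (-c)).neg
  have e : (fun s => min (f s) c) = fun s => - max (-f s) (-c) := by
    funext s; rw [max_neg_neg, neg_neg]
  rw [e]; exact h

theorem GLip.mul {f g : ℝ → ℝ} (hf : GLip f) (hg : GLip g) {A B : ℝ} (hA : ∀ s, |f s| ≤ A)
    (hB : ∀ s, |g s| ≤ B) : GLip fun s => f s * g s := by
  obtain ⟨k, hk, h1⟩ := hf
  obtain ⟨l, hl, h2⟩ := hg
  have hA0 : 0 ≤ A := (abs_nonneg _).trans (hA 0)
  have hB0 : 0 ≤ B := (abs_nonneg _).trans (hB 0)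
  refine ⟨A * l + k * B, by positivity, fun s t => ?_⟩
  have : f s * g s - f t * g t = f s * (g s - g t) + (f s - f t) * g t := by ring
  rw [this]
  refine (abs_add_le _ _).trans ?_
  rw [abs_mul, abs_mul]
  have e1 : |f s| * |g s - g t| ≤ A * (l * |s - t|) :=
    mul_le_mul (hA s) (h2 s t) (abs_nonneg _) hA0
  have e2 : |f s - f t| * |g t| ≤ (k * |s - t|) * B :=
    mul_le_mul (h1 s t) (hB t) (abs_nonneg _) (by positivity)
  linarith

theorem GLip_id : GLip fun s => s := ⟨1, zero_le_one, fun s t => by simp⟩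

theorem GLip.comp_on {f c : ℝ → ℝ} {S : Set ℝ} (hc : GLip c) (hcS : ∀ s, c s ∈ S) {k : ℝ} (hk : 0 ≤ k)
    (hf : ∀ s ∈ S, ∀ t ∈ S, |f s - f t| ≤ k * |s - t|) : GLip fun s => f (c s) := by
  obtain ⟨l, hl, h1⟩ := hc
  refine ⟨k * l, by positivity, fun s t => ?_⟩
  refine (hf _ (hcS s) _ (hcS t)).trans ?_
  rw [mul_assoc]
  exact mul_le_mul_of_nonneg_left (h1 s t) hk

theorem poly_lip (P : Polynomial ℝ) (K : ℝ) (hK : 0 ≤ K) :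
    ∃ k : ℝ, 0 ≤ k ∧ ∀ s ∈ Icc 0 K, ∀ t ∈ Icc 0 K, |P.eval s - P.eval t| ≤ k * |s - t| := by
  obtain ⟨k, hk⟩ := (isCompact_Icc (a := (0:ℝ)) (b := K)).exists_bound_of_continuousOn
    (f := fun s => P.derivative.eval s) P.derivative.continuous.continuousOn
  refine ⟨k, (norm_nonneg _).trans (hk 0 ⟨le_rfl, hK⟩), fun s hs t ht => ?_⟩
  have := (convex_Icc (0:ℝ) K).norm_image_sub_le_of_norm_hasDerivWithin_le (f := fun x => P.eval x)
    (f' := fun s => P.derivative.eval s)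
    (fun x _ => (P.hasDerivAt x).hasDerivWithinAt) hk ht hs
  simpa [Real.norm_eq_abs] using this

theorem approx_g {g : ℝ → ℝ} (hgc : ContinuousOn g (Ici 0)) (hg0 : g 0 = 0) (hgn : ∀ s, 0 ≤ s → 0 ≤ g s)
    {ε κ K η L : ℝ} (hε : 0 < ε) (hκ : 0 ≤ κ) (hεK : ε ≤ K) (hη : 0 < η) (hL : 0 ≤ L)
    (hlip : ∀ s ∈ Icc 0 ε, ∀ t ∈ Icc 0 ε, |g s - g t| ≤ κ * |s - t|) :
    ∃ h : ℝ → ℝ, GLip h ∧ (∀ s ≤ 0, h s = 0) ∧ (∀ s, 0 ≤ h s) ∧ (∀ s ∈ Icc 0 (ε / 2), h s = g s) ∧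
      (∀ s ∈ Icc 0 K, |h s - g s| ≤ η) ∧ (∀ s, K ≤ s → h s = h K + L * (s - K)) := by
  have hK : 0 < K := hε.trans_le hεK
  obtain ⟨P, hP⟩ := exists_polynomial_near_of_continuousOn 0 K g (hgc.mono Icc_subset_Ici_self) η hη
  obtain ⟨k, hk, hPl⟩ := poly_lip P K hK.le
  let c1 : ℝ → ℝ := fun s => min (max s 0) ε
  let cK : ℝ → ℝ := fun s => min (max s 0) K
  let G1 : ℝ → ℝ := fun s => g (c1 s)
  let P2 : ℝ → ℝ := fun s => max (P.eval (cK s)) 0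
  let χ : ℝ → ℝ := fun s => max (min (2 + (-2 / ε) * s) 1) 0
  have hc1 : GLip c1 := (GLip_id.max_const 0).min_const ε
  have hcK : GLip cK := (GLip_id.max_const 0).min_const K
  have hc1m : ∀ s, c1 s ∈ Icc 0 ε := fun s => ⟨le_min (le_max_right _ _) hε.le, min_le_right _ _⟩
  have hcKm : ∀ s, cK s ∈ Icc 0 K := fun s => ⟨le_min (le_max_right _ _) hK.le, min_le_right _ _⟩
  have hG1 : GLip G1 := hc1.comp_on hc1m hκ hlip
  have hP2 : GLip P2 := (hcK.comp_on (f := fun x => P.eval x) hcKm hk hPl).max_const 0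
  have hχ : GLip χ := by
    have h2 : GLip fun _ => (2:ℝ) := ⟨0, le_rfl, by simp⟩
    exact ((h2.add (GLip_id.const_mul (-2 / ε))).min_const 1).max_const 0
  have hχ0 : ∀ s, 0 ≤ χ s := fun s => le_max_right _ _
  have hχ1 : ∀ s, χ s ≤ 1 := fun s => max_le (min_le_right _ _) zero_le_one
  have hχa : ∀ s, |χ s| ≤ 1 := fun s => by rw [abs_of_nonneg (hχ0 s)]; exact hχ1 s
  have hχone : ∀ s, s ≤ ε / 2 → χ s = 1 := by
    intro s hs
    have : 1 ≤ 2 + (-2 / ε) * s := by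
      have : 2 / ε * s ≤ 1 := by rw [div_mul_eq_mul_div, div_le_iff₀ hε]; linarith
      rw [neg_div]; linarith
    simp only [χ]; rw [min_eq_right this]; simp
  have hχzero : ∀ s, ε ≤ s → χ s = 0 := by
    intro s hs
    have : 2 + (-2 / ε) * s ≤ 0 := by
      have : 2 ≤ 2 / ε * s := by rw [div_mul_eq_mul_div, le_div_iff₀ hε]; linarith
      rw [neg_div]; linarith
    simp only [χ]; exact max_eq_right ((min_le_left _ _).trans this)
  have hG1n : ∀ s, 0 ≤ G1 s := fun s => hgn _ (hc1m s).1
  have hP2n : ∀ s, 0 ≤ P2 s := fun s => le_max_right _ _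
  have hbd : ∃ B, ∀ s, |G1 s + - P2 s| ≤ B := by
    obtain ⟨B1, hB1⟩ := (isCompact_Icc (a := (0:ℝ)) (b := ε)).exists_bound_of_continuousOn
      (hgc.mono Icc_subset_Ici_self)
    obtain ⟨B2, hB2⟩ := (isCompact_Icc (a := (0:ℝ)) (b := K)).exists_bound_of_continuousOn
      (f := fun s => max (P.eval s) 0) (P.continuous.max continuous_const).continuousOn
    refine ⟨B1 + B2, fun s => (abs_add_le _ _).trans ?_⟩
    rw [abs_neg]
    exact add_le_add (hB1 _ (hc1m s)) (hB2 _ (hcKm s))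
  obtain ⟨B, hB⟩ := hbd
  let h : ℝ → ℝ := fun s => (P2 s + χ s * (G1 s + - P2 s)) + L * max (s + -K) 0
  have hh : ∀ s, h s = (χ s * G1 s + (1 - χ s) * P2 s) + L * max (s + -K) 0 := fun s => by
    simp only [h]; ring
  have hhK : ∀ s, s ≤ K → h s = χ s * G1 s + (1 - χ s) * P2 s := fun s hs => by
    rw [hh, max_eq_right (by linarith)]; ring
  have hP2a : ∀ s ∈ Icc 0 K, |P2 s - g s| ≤ η := by
    intro s hs
    have e1 : cK s = s := by simp only [cK]; rw [max_eq_left hs.1, min_eq_left hs.2]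
    have e2 : |max (P.eval s) 0 - max (g s) 0| ≤ |P.eval s - g s| := abs_max_sub_max_le_abs _ _ _
    rw [max_eq_left (hgn s hs.1)] at e2
    simp only [P2]; rw [e1]
    exact e2.trans (hP s hs).le
  have hG1e : ∀ s ∈ Icc 0 ε, G1 s = g s := by
    intro s hs
    have e1 : c1 s = s := by simp only [c1]; rw [max_eq_left hs.1, min_eq_left hs.2]
    simp only [G1]; rw [e1]
  refine ⟨h, ?_, ?_, ?_, ?_, ?_, ?_⟩
  · have hmK : GLip fun s => max (s + -K) 0 := by
      have h2 : GLip fun _ => (-K:ℝ) := ⟨0, le_rfl, by simp⟩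
      exact (GLip_id.add h2).max_const 0
    exact (hP2.add (hχ.mul (hG1.add hP2.neg) hχa hB)).add (hmK.const_mul L)
  · intro s hs
    rw [hhK s (by linarith), hχone s (by linarith)]
    have e1 : c1 s = 0 := by simp only [c1]; rw [max_eq_right hs, min_eq_left hε.le]
    simp only [G1]; rw [e1, hg0]; ring
  · intro s
    rw [hh]
    have e1 := mul_nonneg (hχ0 s) (hG1n s)
    have e2 := mul_nonneg (sub_nonneg.2 (hχ1 s)) (hP2n s)
    have e3 := mul_nonneg hL (le_max_right (s + -K) 0)
    linarith
  · intro s hs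
    rw [hhK s (by linarith [hs.2]), hχone s hs.2, hG1e s ⟨hs.1, by linarith [hs.2]⟩]; ring
  · intro s hs
    rw [hhK s hs.2]
    have e0 := hP2a s hs
    have e1 : χ s * G1 s = χ s * g s := by
      rcases le_total s ε with h1 | h1
      · rw [hG1e s ⟨hs.1, h1⟩]
      · rw [hχzero s h1]; ring
    have e2 : χ s * G1 s + (1 - χ s) * P2 s - g s = (1 - χ s) * (P2 s - g s) := by rw [e1]; ring
    rw [e2, abs_mul, abs_of_nonneg (sub_nonneg.2 (hχ1 s))]
    have := mul_le_mul_of_nonneg_right (show 1 - χ s ≤ 1 by linarith [hχ0 s]) (abs_nonneg (P2 s - g s))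
    linarith
  · intro s hs
    have hz1 := hχzero s (hεK.trans hs)
    have hz2 := hχzero K hεK
    rw [hhK K le_rfl, hh, hz1, hz2, max_eq_left (by linarith)]
    have e1 : cK s = K := by simp only [cK]; rw [max_eq_left (by linarith), min_eq_right hs]
    have e2 : cK K = K := by simp only [cK]; rw [max_eq_left (by linarith), min_eq_right le_rfl]
    simp only [P2]; rw [e1, e2]; ring

theorem pos_sol {R₁ R₂ : ℝ} {p Q g : ℝ → ℝ} {p0 p1 q1 : ℝ}
    (hc : RCoef p Q p0 p1 q1) {w y : ℝ → ℝ} (hs : RSol R₁ R₂ p Q g 0 w y) (hy2 : y R₂ = 0)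
    (hw : ∀ r ∈ Icc R₁ R₂, 0 ≤ w r) (hw1 : 0 < w R₁) {ε κ : ℝ} (hε : 0 < ε) (hκ : 0 ≤ κ)
    (hg0 : g 0 = 0) (hlip : ∀ s ∈ Icc 0 ε, ∀ t ∈ Icc 0 ε, |g s - g t| ≤ κ * |s - t|) :
    ∀ r ∈ Icc R₁ R₂, 0 < w r := by
  have hpos : ∀ r, 0 < p r := fun r => hc.p0pos.trans_le (hc.lb r)
  have hp0 := hc.p0pos
  have hp1 : 0 < p1 := hp0.trans_le ((hc.lb 0).trans (hc.ub 0))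
  have hq1 : 0 ≤ q1 := (abs_nonneg _).trans (hc.qb 0)
  have hwc : ContinuousOn w (Icc R₁ R₂) := fun r hr => (hs.dw r hr).continuousAt.continuousWithinAt
  by_contra hcon
  push Not at hcon
  obtain ⟨r', hr', hw'⟩ := hcon
  have hcl : IsCompact (Icc R₁ R₂ ∩ w ⁻¹' Iic 0) := by
    have : IsClosed (Icc R₁ R₂ ∩ w ⁻¹' Iic 0) :=
      hwc.preimage_isClosed_of_isClosed isClosed_Icc isClosed_Iic
    exact isCompact_Icc.of_isClosed_subset this inter_subset_left
  obtain ⟨r0, hr0⟩ := hcl.exists_isLeast ⟨r', hr', hw'⟩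
  have hr0I := hr0.1.1
  have hwr0 : w r0 = 0 := le_antisymm hr0.1.2 (hw r0 hr0I)
  have hlt : R₁ < r0 := by
    rcases hr0I.1.eq_or_lt with e | h
    · rw [← e] at hwr0; linarith
    · exact h
  have hy0 : y r0 = 0 := by
    rcases hr0I.2.eq_or_lt with e | h2
    · rw [e, hy2]
    have hlm : IsLocalMin w r0 := by
      filter_upwards [Icc_mem_nhds hlt h2] with r hr
      rw [hwr0]; exact hw r hr
    have := hlm.hasDerivAt_eq_zero (hs.dw r0 hr0I)
    rcases div_eq_zero_iff.1 this with h | h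
    · exact h
    · exact absurd h (hpos _).ne'
  obtain ⟨d1, hd1, hball⟩ : ∃ d > 0, ∀ r, |r - r0| < d → w r < ε := by
    have : ∀ᶠ r in nhds r0, w r < ε :=
      (hs.dw r0 hr0I).continuousAt.eventually (gt_mem_nhds (by rw [hwr0]; exact hε))
    obtain ⟨d, hd, h⟩ := Metric.eventually_nhds_iff.1 this
    exact ⟨d, hd, fun r hr => h (by rwa [Real.dist_eq])⟩
  set D : ℝ := p1 * q1 * κ with hD
  have hD0 : 0 ≤ D := by positivity
  obtain ⟨d, hd0, hda, hdb, hdc, hdd⟩ : ∃ d > 0, d ≤ r0 - R₁ ∧ d < d1 ∧ d ≤ 1 ∧ D / p0 * d ≤ 1 / 2 := by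
    refine ⟨min (min (r0 - R₁) (d1 / 2)) (min 1 (1 / (2 * (D / p0 + 1)))), ?_, ?_, ?_, ?_, ?_⟩
    · refine lt_min (lt_min (by linarith) (by linarith)) (lt_min one_pos (by positivity))
    · exact (min_le_left _ _).trans (min_le_left _ _)
    · exact ((min_le_left _ _).trans (min_le_right _ _)).trans_lt (by linarith)
    · exact (min_le_right _ _).trans (min_le_left _ _)
    · have : 0 ≤ D / p0 := by positivity
      refine (mul_le_mul_of_nonneg_left ((min_le_right _ _).trans (min_le_right _ _)) this).trans ?_
      rw [mul_one_div, div_le_div_iff₀ (by positivity) (by norm_num)]; linarith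
  have hsub : ∀ r ∈ Icc (r0 - d) r0, r ∈ Icc R₁ R₂ := fun r hr =>
    ⟨by linarith [hr.1], hr.2.trans hr0I.2⟩
  obtain ⟨ρ, hρ, hmax⟩ := isCompact_Icc.exists_isMaxOn
    (⟨r0, by linarith, le_rfl⟩ : (Icc (r0 - d) r0).Nonempty) (hwc.mono hsub)
  set M := w ρ with hM
  have hM0 : 0 ≤ M := hw ρ (hsub ρ hρ)
  have hgw : ∀ r ∈ Icc (r0 - d) r0, |g (w r)| ≤ κ * M := by
    intro r hr
    have e0 := hw r (hsub r hr)
    have e1 := hlip (w r) ⟨e0, (hball r (by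
      rw [abs_lt]; constructor <;> linarith [hr.1, hr.2])).le⟩ 0 ⟨le_rfl, hε.le⟩
    rw [hg0, sub_zero, sub_zero, abs_of_nonneg e0] at e1
    exact e1.trans (mul_le_mul_of_nonneg_left (hmax hr) hκ)
  have hyr : ∀ r ∈ Icc (r0 - d) r0, |y r| ≤ D * M * d := by
    intro r hr
    have := mv_abs (C := D * M) hr.2 (fun x hx => hs.dy x (hsub x ⟨hr.1.trans hx.1, hx.2⟩))
      (fun x hx => by
        have hx' : x ∈ Icc (r0 - d) r0 := ⟨hr.1.trans hx.1, hx.2⟩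
        rw [max_eq_right (by linarith [hw x (hsub x hx')]), zero_mul, add_zero, add_zero, abs_neg,
          abs_mul, abs_mul, abs_of_pos (hpos x)]
        have e1 : |Q x| * |g (w x)| ≤ q1 * (κ * M) :=
          mul_le_mul (hc.qb x) (hgw x hx') (abs_nonneg _) hq1
        have e2 := mul_le_mul (hc.ub x) e1 (by positivity) hp1.le
        refine e2.trans (le_of_eq ?_); rw [hD]; ring)
    rw [hy0, zero_sub, abs_neg] at this
    refine this.trans (mul_le_mul_of_nonneg_left ?_ (by positivity))
    linarith [hr.1]
  have hMle : M ≤ 1 / 2 * M := by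
    have := mv_abs (C := D * M * d / p0) hρ.2 (fun x hx => hs.dw x (hsub x ⟨hρ.1.trans hx.1, hx.2⟩))
      (fun x hx => by
        rw [abs_div, abs_of_pos (hpos x)]
        exact div_le_div₀ (by positivity) (hyr x ⟨hρ.1.trans hx.1, hx.2⟩) hp0 (hc.lb x))
    rw [hwr0, zero_sub, abs_neg, abs_of_nonneg hM0] at this
    refine this.trans ?_
    have e1 : D * M * d / p0 * (r0 - ρ) ≤ D * M * d / p0 * 1 :=
      mul_le_mul_of_nonneg_left (by linarith [hρ.1]) (by positivity)
    have e2 : D * M * d / p0 * 1 = (D / p0 * d) * M := by ring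
    rw [e2] at e1
    exact e1.trans (mul_le_mul_of_nonneg_right hdd hM0)
  have hz : w (r0 - d) ≤ 0 := by
    have : w (r0 - d) ≤ M := hmax (a := r0 - d) ⟨le_rfl, by linarith⟩
    linarith
  have := hr0.2 ⟨hsub _ ⟨le_rfl, by linarith⟩, hz⟩
  linarith

theorem extract_sub {R₁ R₂ A B : ℝ} (hR : R₁ ≤ R₂) (f : ℕ → ℝ → ℝ)
    (hA : ∀ n, ∀ r ∈ Icc R₁ R₂, |f n r| ≤ A)
    (hB : ∀ n, ∀ r ∈ Icc R₁ R₂, ∀ s ∈ Icc R₁ R₂, |f n r - f n s| ≤ B * |r - s|) :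
    ∃ φ : ℕ → ℕ, StrictMono φ ∧ ∃ F : ℝ → ℝ, Continuous F ∧
      ∀ r ∈ Icc R₁ R₂, Tendsto (fun n => f (φ n) r) atTop (nhds (F r)) := by
  have hcont : ∀ n, Continuous fun x : Icc R₁ R₂ => f n x := by
    intro n
    have hl : LipschitzWith (Real.toNNReal B) fun x : Icc R₁ R₂ => f n x := by
      refine LipschitzWith.of_dist_le_mul fun x y => ?_
      rw [Real.dist_eq, Subtype.dist_eq, Real.dist_eq]
      refine (hB n x x.2 y y.2).trans ?_
      exact mul_le_mul_of_nonneg_right (Real.le_coe_toNNReal B) (abs_nonneg _)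
    exact hl.continuous
  let X : ℕ → BoundedContinuousFunction (Icc R₁ R₂) ℝ := fun n =>
    BoundedContinuousFunction.mkOfCompact ⟨fun x : Icc R₁ R₂ => f n x, hcont n⟩
  have hX : ∀ n (x : Icc R₁ R₂), X n x = f n x := fun n x => rfl
  have hcomp : IsCompact (closure (range X)) := by
    refine BoundedContinuousFunction.arzela_ascoli (Icc (-A) A) isCompact_Icc (range X) ?_ ?_
    · rintro _ x ⟨n, rfl⟩
      exact abs_le.1 (hA n x x.2)
    · refine Metric.equicontinuous_of_continuity_modulus (fun d => B * d) ?_ _ ?_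
      · have : Continuous fun d : ℝ => B * d := by fun_prop
        simpa using this.tendsto 0
      · rintro x y ⟨_, n, rfl⟩
        change dist (f n x) (f n y) ≤ _
        rw [Real.dist_eq, Subtype.dist_eq, Real.dist_eq]
        exact hB n x x.2 y y.2
  obtain ⟨F, -, φ, hφ, hF⟩ := hcomp.tendsto_subseq (x := X)
    (fun n => subset_closure (mem_range_self n))
  refine ⟨φ, hφ, fun r => F (projIcc R₁ R₂ hR r), F.continuous.comp continuous_projIcc, ?_⟩
  intro r hr
  have h1 := (continuous_eval_const (F := BoundedContinuousFunction (Icc R₁ R₂) ℝ)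
    (⟨r, hr⟩ : Icc R₁ R₂)).tendsto F
  have h2 := h1.comp hF
  simp only [projIcc_of_mem hR hr]
  exact h2

theorem limit_sol {R₁ R₂ p0 p1 q1 Rs δ : ℝ} {p Q g : ℝ → ℝ} (hR : R₁ < R₂)
    (hc : RCoef p Q p0 p1 q1) (hgc : ContinuousOn g (Ici 0))
    (h w y : ℕ → ℝ → ℝ) (hh : ∀ n, Continuous (h n))
    (hs : ∀ n, RSol R₁ R₂ p Q (h n) 0 (w n) (y n))
    (hw0 : ∀ n, ∀ r ∈ Icc R₁ R₂, 0 ≤ w n r) (hw1 : ∀ n, ∀ r ∈ Icc R₁ R₂, w n r ≤ Rs)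
    (hδ : ∀ n, δ ≤ w n R₁) (hy1 : ∀ n, y n R₁ = 0) (hy2 : ∀ n, y n R₂ = 0)
    (happ : ∀ n, ∀ s ∈ Icc 0 Rs, |h n s - g s| ≤ 1 / ((n : ℝ) + 1)) :
    ∃ w y : ℝ → ℝ, RSol R₁ R₂ p Q g 0 w y ∧ y R₁ = 0 ∧ y R₂ = 0 ∧ δ ≤ w R₁ ∧
      ∀ r ∈ Icc R₁ R₂, 0 ≤ w r := by
  have hp1 : 0 < p1 := hc.p0pos.trans_le ((hc.lb 0).trans (hc.ub 0))
  have hq1 : 0 ≤ q1 := (abs_nonneg _).trans (hc.qb 0)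
  have hppos : ∀ r, 0 < p r := fun r => hc.p0pos.trans_le (hc.lb r)
  obtain ⟨G, hG⟩ := isCompact_Icc.exists_bound_of_continuousOn
    (hgc.mono (Icc_subset_Ici_self : Icc 0 Rs ⊆ Ici 0))
  have hmR : R₁ ∈ Icc R₁ R₂ := ⟨le_rfl, hR.le⟩
  have hmR2 : R₂ ∈ Icc R₁ R₂ := ⟨hR.le, le_rfl⟩
  have hRs : 0 ≤ Rs := (hw0 0 R₁ hmR).trans (hw1 0 R₁ hmR)
  have hG0 : 0 ≤ G := (norm_nonneg _).trans (hG 0 ⟨le_rfl, hRs⟩)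
  have hhb : ∀ n, ∀ r ∈ Icc R₁ R₂, |h n (w n r)| ≤ G + 1 := by
    intro n r hr
    have hm : w n r ∈ Icc 0 Rs := ⟨hw0 n r hr, hw1 n r hr⟩
    have e1 := happ n _ hm
    have e2 := hG _ hm
    rw [Real.norm_eq_abs] at e2
    have e3 : 1 / ((n : ℝ) + 1) ≤ 1 := by
      rw [div_le_one (by positivity)]; linarith [(Nat.cast_nonneg n : (0:ℝ) ≤ n)]
    have e4 : h n (w n r) = (h n (w n r) - g (w n r)) + g (w n r) := by ring
    rw [e4]
    refine (abs_add_le _ _).trans ?_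
    linarith
  have hdy : ∀ n, ∀ r ∈ Icc R₁ R₂, HasDerivAt (y n) (-(p r * (Q r * h n (w n r)))) r := by
    intro n r hr
    have := (hs n).dy r hr
    rwa [max_eq_right (by linarith [hw0 n r hr]), zero_mul, add_zero, add_zero] at this
  set C := p1 * (q1 * (G + 1)) with hC
  have hC0 : 0 ≤ C := by positivity
  have hpQ : ∀ r a, |a| ≤ G + 1 → |-(p r * (Q r * a))| ≤ C := by
    intro r a ha
    rw [abs_neg, abs_mul, abs_mul, abs_of_pos (hppos r)]
    exact mul_le_mul (hc.ub r) (mul_le_mul (hc.qb r) ha (abs_nonneg _) hq1) (by positivity) hp1.le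
  have lipgen : ∀ (f f' : ℝ → ℝ) (D : ℝ), (∀ r ∈ Icc R₁ R₂, HasDerivAt f (f' r) r) →
      (∀ r ∈ Icc R₁ R₂, |f' r| ≤ D) →
      ∀ r ∈ Icc R₁ R₂, ∀ s ∈ Icc R₁ R₂, |f r - f s| ≤ D * |r - s| := by
    intro f f' D hf hD r hr s hs
    have key : ∀ a ∈ Icc R₁ R₂, ∀ b ∈ Icc R₁ R₂, a ≤ b → |f b - f a| ≤ D * (b - a) := by
      intro a ha b hb hab
      exact mv_abs hab (fun x hx => hf x ⟨ha.1.trans hx.1, hx.2.trans hb.2⟩)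
        (fun x hx => hD x ⟨ha.1.trans hx.1, hx.2.trans hb.2⟩)
    rcases le_total s r with hle | hle
    · rw [abs_of_nonneg (sub_nonneg.2 hle)]; exact key s hs r hr hle
    · rw [abs_sub_comm, abs_sub_comm r s, abs_of_nonneg (sub_nonneg.2 hle)]; exact key r hr s hs hle
  have hylip : ∀ n, ∀ r ∈ Icc R₁ R₂, ∀ s ∈ Icc R₁ R₂, |y n r - y n s| ≤ C * |r - s| :=
    fun n => lipgen _ _ C (hdy n) (fun r hr => hpQ _ _ (hhb n r hr))
  have hyb : ∀ n, ∀ r ∈ Icc R₁ R₂, |y n r| ≤ C * (R₂ - R₁) := by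
    intro n r hr
    have := hylip n r hr R₁ hmR
    rw [hy1, sub_zero, abs_of_nonneg (sub_nonneg.2 hr.1)] at this
    exact this.trans (mul_le_mul_of_nonneg_left (by linarith [hr.2]) hC0)
  have hdb : ∀ n, ∀ r ∈ Icc R₁ R₂, |y n r / p r| ≤ C * (R₂ - R₁) / p0 := by
    intro n r hr
    rw [abs_div, abs_of_pos (hppos r)]
    exact div_le_div₀ (mul_nonneg hC0 (by linarith)) (hyb n r hr) hc.p0pos (hc.lb r)
  have hwlip : ∀ n, ∀ r ∈ Icc R₁ R₂, ∀ s ∈ Icc R₁ R₂,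
      |w n r - w n s| ≤ C * (R₂ - R₁) / p0 * |r - s| :=
    fun n => lipgen _ _ _ (hs n).dw (hdb n)
  obtain ⟨φ, hφ, W, hWc, hW⟩ := extract_sub hR.le w
    (A := Rs) (fun n r hr => by rw [abs_of_nonneg (hw0 n r hr)]; exact hw1 n r hr) hwlip
  obtain ⟨ψ, hψ, Y, hYc, hY⟩ := extract_sub hR.le (fun n => y (φ n))
    (fun n => hyb (φ n)) (fun n => hylip (φ n))
  set χ : ℕ → ℕ := fun n => φ (ψ n) with hχ
  have hχm : Tendsto χ atTop atTop := (hφ.comp hψ).tendsto_atTop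
  have hWχ : ∀ r ∈ Icc R₁ R₂, Tendsto (fun n => w (χ n) r) atTop (nhds (W r)) := fun r hr =>
    (hW r hr).comp hψ.tendsto_atTop
  have hYχ : ∀ r ∈ Icc R₁ R₂, Tendsto (fun n => y (χ n) r) atTop (nhds (Y r)) := fun r hr => hY r hr
  have hW0 : ∀ r ∈ Icc R₁ R₂, 0 ≤ W r := fun r hr =>
    ge_of_tendsto' (hWχ r hr) (fun n => hw0 _ r hr)
  have hgm : Continuous fun r => g (max (W r) 0) :=
    hgc.comp_continuous (by fun_prop) (fun r => mem_Ici.2 (le_max_right _ _))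
  have hhlim : ∀ r ∈ Icc R₁ R₂,
      Tendsto (fun n => h (χ n) (w (χ n) r)) atTop (nhds (g (max (W r) 0))) := by
    intro r hr
    rw [max_eq_left (hW0 r hr)]
    have t1 : Tendsto (fun n => g (w (χ n) r)) atTop (nhds (g (W r))) := by
      have := hgc (W r) (hW0 r hr)
      refine Tendsto.comp this ?_
      exact tendsto_nhdsWithin_iff.2 ⟨hWχ r hr, Eventually.of_forall fun n => hw0 _ r hr⟩
    have t2 : Tendsto (fun n => h (χ n) (w (χ n) r) - g (w (χ n) r)) atTop (nhds 0) := by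
      refine squeeze_zero_norm (a := fun n => 1 / ((χ n : ℝ) + 1)) (fun n => ?_) ?_
      · exact happ _ _ ⟨hw0 _ r hr, hw1 _ r hr⟩
      · exact (tendsto_one_div_add_atTop_nhds_zero_nat (𝕜 := ℝ)).comp hχm
    simpa using t2.add t1
  have hsub : ∀ r ∈ Icc R₁ R₂, uIcc R₁ r ⊆ Icc R₁ R₂ := by
    intro r hr
    rw [uIcc_of_le hr.1]
    exact Icc_subset_Icc_right hr.2
  have hycon : ∀ n, ContinuousOn (y n) (Icc R₁ R₂) := fun n r hr =>
    (hdy n r hr).continuousAt.continuousWithinAt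
  have hwcon : ∀ n, ContinuousOn (w n) (Icc R₁ R₂) := fun n r hr =>
    ((hs n).dw r hr).continuousAt.continuousWithinAt
  have c1 : ∀ n, ContinuousOn (fun r => y n r / p r) (Icc R₁ R₂) := fun n =>
    (hycon n).div hc.hp.continuousOn (fun r _ => (hppos r).ne')
  have c2 : ∀ n, ContinuousOn (fun r => -(p r * (Q r * h n (w n r)))) (Icc R₁ R₂) := fun n =>
    (hc.hp.continuousOn.mul (hc.hQ.continuousOn.mul ((hh n).comp_continuousOn (hwcon n)))).neg
  have passlim : ∀ (f f' : ℕ → ℝ → ℝ) (F F' : ℝ → ℝ) (D : ℝ),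
      (∀ n, ∀ r ∈ Icc R₁ R₂, HasDerivAt (f n) (f' n r) r) →
      (∀ n, ContinuousOn (f' n) (Icc R₁ R₂)) → (∀ n, ∀ r ∈ Icc R₁ R₂, |f' n r| ≤ D) →
      (∀ r ∈ Icc R₁ R₂, Tendsto (fun n => f n r) atTop (nhds (F r))) →
      (∀ r ∈ Icc R₁ R₂, Tendsto (fun n => f' n r) atTop (nhds (F' r))) →
      ∀ r ∈ Icc R₁ R₂, F R₁ + ∫ x in R₁..r, F' x = F r := by
    intro f f' F F' D hd hcn hD hF hF' r hr
    have hsr := hsub r hr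
    have t1 : Tendsto (fun n => ∫ x in R₁..r, f' n x) atTop (nhds (∫ x in R₁..r, F' x)) := by
      refine intervalIntegral.tendsto_integral_filter_of_dominated_convergence (fun _ => D) ?_ ?_ ?_ ?_
      · refine Eventually.of_forall fun n => ?_
        exact ((hcn n).mono (uIoc_subset_uIcc.trans hsr)).aestronglyMeasurable measurableSet_uIoc
      · refine Eventually.of_forall fun n => Eventually.of_forall fun x hx => ?_
        exact hD n x (hsr (uIoc_subset_uIcc hx))
      · exact intervalIntegrable_const
      · exact Eventually.of_forall fun x hx => hF' x (hsr (uIoc_subset_uIcc hx))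
    have e : ∀ n, ∫ x in R₁..r, f' n x = f n r - f n R₁ := fun n =>
      intervalIntegral.integral_eq_sub_of_hasDerivAt (fun x hx => hd n x (hsr hx))
        ((hcn n).mono hsr).intervalIntegrable
    simp_rw [e] at t1
    have := tendsto_nhds_unique t1 ((hF r hr).sub (hF R₁ hmR))
    rw [this]; ring
  have hWi := passlim (fun n => w (χ n)) (fun n r => y (χ n) r / p r) W (fun r => Y r / p r) _
    (fun n => (hs _).dw) (fun n => c1 _) (fun n => hdb _) hWχ (fun r hr => (hYχ r hr).div_const _)
  have hYi := passlim (fun n => y (χ n)) (fun n r => -(p r * (Q r * h (χ n) (w (χ n) r)))) Y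
    (fun r => -(p r * (Q r * g (max (W r) 0)))) C
    (fun n => hdy _) (fun n => c2 _) (fun n r hr => hpQ _ _ (hhb _ r hr)) hYχ
    (fun r hr => (((hhlim r hr).const_mul _).const_mul _).neg)
  have hY1 : Y R₁ = 0 := tendsto_nhds_unique (hYχ R₁ hmR) (by simp [hy1])
  have hY2 : Y R₂ = 0 := tendsto_nhds_unique (hYχ R₂ hmR2) (by simp [hy2])
  have cW : Continuous fun r => Y r / p r := hYc.div hc.hp (fun r => (hppos r).ne')
  have cY : Continuous fun r => -(p r * (Q r * g (max (W r) 0))) :=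
    (hc.hp.mul (hc.hQ.mul hgm)).neg
  refine ⟨fun r => W R₁ + ∫ x in R₁..r, Y x / p x,
    fun r => Y R₁ + ∫ x in R₁..r, -(p x * (Q x * g (max (W x) 0))), ⟨?_, ?_⟩, ?_, ?_, ?_, ?_⟩
  · intro r hr
    have := ((cW.integral_hasStrictDerivAt R₁ r).hasDerivAt).const_add (W R₁)
    simp only [hYi r hr]
    exact this
  · intro r hr
    have := ((cY.integral_hasStrictDerivAt R₁ r).hasDerivAt).const_add (Y R₁)
    simp only [hWi r hr]
    rw [max_eq_left (hW0 r hr)] at this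
    rw [max_eq_right (by linarith [hW0 r hr]), zero_mul, add_zero, add_zero]
    exact this
  · simp only [hYi R₁ hmR]; exact hY1
  · simp only [hYi R₂ hmR2]; exact hY2
  · simp only [hWi R₁ hmR]; exact ge_of_tendsto' (hWχ R₁ hmR) (fun n => hδ _)
  · intro r hr
    simp only [hWi r hr]; exact hW0 r hr

theorem small_lip {g : ℝ → ℝ} {κ : ℝ} (hκ : 0 < κ) (hsmooth : ∃ ε₀ > (0:ℝ), ∃ g' : ℝ → ℝ,
      (∀ s ∈ Ico (0:ℝ) ε₀, HasDerivWithinAt g (g' s) (Ico (0:ℝ) ε₀) s) ∧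
      ContinuousOn g' (Ico (0:ℝ) ε₀) ∧ g' 0 = 0) :
    ∃ ε > 0, ∀ s ∈ Icc 0 ε, ∀ t ∈ Icc 0 ε, |g s - g t| ≤ κ * |s - t| := by
  obtain ⟨ε₀, hε₀, g', hd, hcg, hg0⟩ := hsmooth
  have h1 := hcg 0 ⟨le_rfl, hε₀⟩
  rw [Metric.continuousWithinAt_iff] at h1
  obtain ⟨d, hd0, hdd⟩ := h1 κ hκ
  refine ⟨min (d / 2) (ε₀ / 2), by positivity, ?_⟩
  have hsub : Icc 0 (min (d / 2) (ε₀ / 2)) ⊆ Ico 0 ε₀ := fun x hx =>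
    ⟨hx.1, by have := hx.2.trans (min_le_right _ _); linarith⟩
  intro s hs t ht
  have := (convex_Icc 0 (min (d / 2) (ε₀ / 2))).norm_image_sub_le_of_norm_hasDerivWithin_le
    (f := g) (f' := g') (C := κ) (x := t) (y := s)
    (fun x hx => (hd x (hsub hx)).mono hsub) (fun x hx => by
      have hxd := hx.2.trans (min_le_left _ _)
      have := hdd (hsub hx) (by rw [Real.dist_eq, sub_zero, abs_of_nonneg hx.1]; linarith)
      rw [hg0, dist_zero_right] at this
      exact this.le) ht hs
  simpa only [Real.norm_eq_abs] using this

theorem rcoef_mk {N : ℕ} {R₁ R₂ : ℝ} (hR1 : 0 < R₁) (hR : R₁ < R₂) {Q : ℝ → ℝ}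
    (hQc : ContinuousOn Q (Icc R₁ R₂)) : ∃ p Q' : ℝ → ℝ, ∃ p0 p1 q1 : ℝ,
      RCoef p Q' p0 p1 q1 ∧ (∀ r ∈ Icc R₁ R₂, p r = r ^ N) ∧ (∀ r ∈ Icc R₁ R₂, Q' r = Q r) := by
  obtain ⟨q1, hq1⟩ := isCompact_Icc.exists_bound_of_continuousOn hQc
  refine ⟨fun r => (projIcc R₁ R₂ hR.le r : ℝ) ^ N, fun r => Q (projIcc R₁ R₂ hR.le r),
    R₁ ^ N, R₂ ^ N, q1, ⟨?_, ?_, ?_, ?_, ?_, ?_⟩, ?_, ?_⟩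
  · exact (continuous_subtype_val.comp continuous_projIcc).pow N
  · exact hQc.comp_continuous (continuous_subtype_val.comp continuous_projIcc) (fun r => Subtype.coe_prop _)
  · positivity
  · intro r
    exact pow_le_pow_left₀ hR1.le (projIcc R₁ R₂ hR.le r).2.1 N
  · intro r
    exact pow_le_pow_left₀ (hR1.le.trans (projIcc R₁ R₂ hR.le r).2.1) (projIcc R₁ R₂ hR.le r).2.2 N
  · intro r
    exact hq1 _ (projIcc R₁ R₂ hR.le r).2
  · intro r hr
    simp only [projIcc_of_mem hR.le hr]
  · intro r hr
    simp only [projIcc_of_mem hR.le hr]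

theorem condQ1_congr {R₁ R₂ : ℝ} {Q Q' : ℝ → ℝ} (h : ∀ r ∈ Icc R₁ R₂, Q' r = Q r)
    (hq : CondQ1 R₁ R₂ Q) : CondQ1 R₁ R₂ Q' := by
  obtain ⟨m, σ, τ, hm, h1, h2, h3, h4, h5⟩ := hq
  have hs : ∀ i, ∀ r ∈ Icc (σ i) (τ i), r ∈ Icc R₁ R₂ := fun i r hr =>
    ⟨(h1 i).1.trans hr.1, hr.2.trans (h1 i).2.2⟩
  refine ⟨m, σ, τ, hm, h1, h2, ?_, ?_, ?_⟩
  · intro i r hr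
    rw [h r (hs i r hr)]; exact h3 i r hr
  · intro i
    obtain ⟨r, hr, hQ⟩ := h4 i
    exact ⟨r, hr, by rw [h r (hs i r hr)]; exact hQ⟩
  · intro r hr
    rw [h r hr.1]; exact h5 r hr

theorem exists_rsol {R₁ R₂ p0 p1 q1 : ℝ} {p Q g : ℝ → ℝ} (hR : R₁ < R₂)
    (hc : RCoef p Q p0 p1 q1) (hq : CondQ1 R₁ R₂ Q) (hI : ∫ r in R₁..R₂, p r * Q r < 0)
    (hg1 : CondG1 g)
    (hsmooth : ∃ ε₀ > (0:ℝ), ∃ g' : ℝ → ℝ,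
      (∀ s ∈ Ico (0:ℝ) ε₀, HasDerivWithinAt g (g' s) (Ico (0:ℝ) ε₀) s) ∧
      ContinuousOn g' (Ico (0:ℝ) ε₀) ∧ g' 0 = 0)
    (hginf : Tendsto (fun s => g s / s) atTop atTop) :
    ∃ w y : ℝ → ℝ, RSol R₁ R₂ p Q g 0 w y ∧ y R₁ = 0 ∧ y R₂ = 0 ∧ ∀ r ∈ Icc R₁ R₂, 0 < w r := by
  obtain ⟨hgc, hgn, hg0, hgp⟩ := hg1
  obtain ⟨L, hL, c, hc0, hap⟩ := apriori hR hc hq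
  obtain ⟨κ, hκ, hsm⟩ := small_a hR hc hI
  obtain ⟨ε, hε, hlip⟩ := small_lip hκ hsmooth
  obtain ⟨s1, hs1⟩ := eventually_atTop.1 (hginf.eventually_ge_atTop (L + 1))
  set s0 := max s1 1 with hs0
  have hs0p : 0 < s0 := zero_lt_one.trans_le (le_max_right _ _)
  have hgs : ∀ s, s0 ≤ s → (L + 1) * s ≤ g s := by
    intro s hs
    have := hs1 s ((le_max_left _ _).trans hs)
    rwa [le_div_iff₀ (hs0p.trans_le hs)] at this
  have hRs : 0 < s0 / c := by positivity
  set K := s0 / c + s0 + ε with hK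
  have hex : ∀ n : ℕ, ∃ h : ℝ → ℝ, GLip h ∧ (∀ s ≤ 0, h s = 0) ∧ (∀ s, 0 ≤ h s) ∧
      (∀ s ∈ Icc 0 (ε / 2), h s = g s) ∧
      (∀ s ∈ Icc 0 K, |h s - g s| ≤ min (1 / ((n : ℝ) + 1)) s0) ∧
      (∀ s, K ≤ s → h s = h K + L * (s - K)) := by
    intro n
    exact approx_g hgc hg0 hgn hε hκ.le (by linarith) (by positivity) hL.le hlip
  choose h hglip hneg hnn heq happ htail using hex
  have hhL : ∀ n s, s0 ≤ s → L * s ≤ h n s := by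
    intro n
    have k1 : ∀ s, s0 ≤ s → s ≤ K → L * s ≤ h n s := by
      intro s hs hsK
      have e1 := (abs_le.1 ((happ n s ⟨hs0p.le.trans hs, hsK⟩).trans (min_le_right _ _))).1
      have e2 := hgs s hs
      linarith
    intro s hs
    rcases le_total s K with hle | hle
    · exact k1 s hs hle
    · rw [htail n s hle]
      have := k1 K (by linarith) le_rfl
      linarith
  have hδ : 0 < ε / 4 := by positivity
  have hsol : ∀ n, ∃ w y : ℝ → ℝ, RSol R₁ R₂ p Q (h n) 0 w y ∧ y R₁ = 0 ∧ y R₂ = 0 ∧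
      ε / 4 ≤ w R₁ ∧ (∀ r ∈ Icc R₁ R₂, 0 ≤ w r) ∧ (∀ r ∈ Icc R₁ R₂, c * w r ≤ s0) := by
    intro n
    obtain ⟨k, hk, hkl⟩ := hglip n
    refine shoot hR hc hq hc0 hap hk hkl (hneg n) (hnn n) hs0p (hhL n) hδ ?_
    refine hsm (h n) (ε / 4) hδ (hneg n 0 le_rfl) ?_ ?_
    · rw [heq n (ε / 4) ⟨hδ.le, by linarith⟩]
      exact hgp _ hδ
    · intro s hs t ht
      rw [heq n s ⟨hs.1, by linarith [hs.2]⟩, heq n t ⟨ht.1, by linarith [ht.2]⟩]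
      exact hlip s ⟨hs.1, by linarith [hs.2]⟩ t ⟨ht.1, by linarith [ht.2]⟩
  choose w y hS hy1 hy2 hwδ hw0 hwc using hsol
  have hcont : ∀ n, Continuous (h n) := by
    intro n
    obtain ⟨k, hk, hkl⟩ := hglip n
    exact (LipschitzWith.of_dist_le_mul (K := ⟨k, hk⟩) fun s t => hkl s t).continuous
  obtain ⟨W, Y, hWY, hY1, hY2, hWδ, hW0⟩ := limit_sol (Rs := s0 / c) (δ := ε / 4) hR hc hgc h w y
    hcont hS hw0 (fun n r hr => by rw [le_div_iff₀ hc0, mul_comm]; exact hwc n r hr) hwδ hy1 hy2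
    (fun n s hs => (happ n s ⟨hs.1, by linarith [hs.2]⟩).trans (min_le_left _ _))
  exact ⟨W, Y, hWY, hY1, hY2,
    pos_sol hc hWY hY2 hW0 (hδ.trans_le hWδ) hε hκ.le hg0 hlip⟩


/-- Theorem: for `N ≥ 2`, `0 < R₁ < R₂`, a continuous radial weight `Q`
satisfying (q1) and (q2), and `g` satisfying (g1), continuously differentiable
on a right neighborhood of `0` with `g'(0) = 0`, and `g(s)/s → +∞` as `s → +∞`,
the Neumann problem `−Δu = Q(‖x‖) g(u)` on the annulus has a positive radially
symmetric solution. -/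
theorem statement_14
    (N : ℕ) (hN : 2 ≤ N) (R₁ R₂ : ℝ) (hR1 : 0 < R₁) (hR12 : R₁ < R₂)
    (Q : ℝ → ℝ) (hQc : ContinuousOn Q (Icc R₁ R₂))
    (hq1 : CondQ1 R₁ R₂ Q)
    (hq2 : (∫ r in R₁..R₂, r ^ (N - 1) * Q r) < 0)
    (g : ℝ → ℝ) (hg1 : CondG1 g)
    (hsmooth : ∃ ε₀ > (0:ℝ), ∃ g' : ℝ → ℝ,
      (∀ s ∈ Ico (0:ℝ) ε₀, HasDerivWithinAt g (g' s) (Ico (0:ℝ) ε₀) s) ∧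
      ContinuousOn g' (Ico (0:ℝ) ε₀) ∧ g' 0 = 0)
    (hginf : Tendsto (fun s => g s / s) atTop atTop) :
    RadialNeumannPosSol N R₁ R₂ Q g := by
  obtain ⟨n, rfl⟩ : ∃ n, N = n + 2 := ⟨N - 2, by omega⟩
  have hn : n + 2 - 1 = n + 1 := by omega
  rw [hn] at hq2
  obtain ⟨p, Q', p0, p1, q1, hc, hp, hQ'⟩ := rcoef_mk (N := n + 1) hR1 hR12 hQc
  have hI : ∫ r in R₁..R₂, p r * Q' r < 0 := by
    have : ∫ r in R₁..R₂, p r * Q' r = ∫ r in R₁..R₂, r ^ (n + 1) * Q r := by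
      refine intervalIntegral.integral_congr fun r hr => ?_
      rw [uIcc_of_le hR12.le] at hr
      simp only [hp r hr, hQ' r hr]
    rw [this]; exact hq2
  obtain ⟨w, y, hs, hy1, hy2, hw⟩ := exists_rsol hR12 hc (condQ1_congr hQ' hq1) hI hg1 hsmooth hginf
  have hrpos : ∀ r ∈ Icc R₁ R₂, 0 < r := fun r hr => hR1.trans_le hr.1
  have hdw : ∀ r ∈ Icc R₁ R₂, HasDerivAt w (y r / r ^ (n + 1)) r := by
    intro r hr
    have := hs.dw r hr
    rwa [hp r hr] at this
  have hdy : ∀ r ∈ Icc R₁ R₂, HasDerivAt y (-(r ^ (n + 1) * (Q r * g (w r)))) r := by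
    intro r hr
    have := hs.dy r hr
    rwa [hp r hr, hQ' r hr, max_eq_right (by linarith [hw r hr]), zero_mul, add_zero, add_zero] at this
  have hdz : ∀ r ∈ Icc R₁ R₂, HasDerivAt (fun r => y r / r ^ (n + 1))
      (-(Q r * g (w r)) - (((n + 2 : ℕ) : ℝ) - 1) / r * (y r / r ^ (n + 1))) r := by
    intro r hr
    have hr0 := (hrpos r hr).ne'
    have h1 := (hdy r hr).div (hasDerivAt_pow (n + 1) r) (pow_ne_zero _ hr0)
    refine h1.congr_deriv ?_
    push_cast
    field_simp
    ring
  have hwcon : ContinuousOn w (Icc R₁ R₂) := fun r hr =>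
    (hdw r hr).continuousAt.continuousWithinAt
  have hzcon : ContinuousOn (fun r => y r / r ^ (n + 1)) (Icc R₁ R₂) := fun r hr =>
    (hdz r hr).continuousAt.continuousWithinAt
  refine ⟨w, fun r => y r / r ^ (n + 1),
    fun r => -(Q r * g (w r)) - (((n + 2 : ℕ) : ℝ) - 1) / r * (y r / r ^ (n + 1)),
    fun r hr => (hdw r hr).hasDerivWithinAt, fun r hr => (hdz r hr).hasDerivWithinAt, ?_, hw, ?_, ?_, ?_⟩
  · refine ((hQc.mul (hg1.1.comp hwcon fun r hr => (hw r hr).le)).neg).sub (ContinuousOn.mul ?_ hzcon)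
    exact continuousOn_const.div continuousOn_id (fun r hr => (hrpos r hr).ne')
  · intro r hr
    ring
  · simp [hy1]
  · simp [hy2]
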